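/- arXiv:1304.1015 — 2 statements merged into one kernel-verified Lean document; each statement's English description precedes it below -/
import Mathlib

section
/- Let μ be a nonzero locally finite nonnegative Borel measure on ℝⁿ that is doubling with respect to the collection 𝔑 of all open rectangles with sides parallel to the coordinate axes (i.e. product-doubling). Then there exists a constant c > 0 such that μ({x ∈ ℝⁿ : M_{𝔑,μ}(1_E)(x) > 1/2}) ≤ c·μ(E) for every Borel set E ⊆ ℝⁿ if and only if there exists p > 1 such that M_{𝔑,μ} is bounded on L^p(μ). -/
open MeasureTheory Set Filter
open scoped ENNReal Topology Pointwise

noncomputable section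

/-- The maximal operator `M_{𝔅,μ}` associated to a measure `μ` and a collection `𝔅`
of subsets of `ℝⁿ`, applied to `f` at the point `x` (valued in `ℝ≥0∞`; it equals `0`
outside the union of `𝔅`). -/
noncomputable def maxOp {n : ℕ} (μ : Measure (EuclideanSpace ℝ (Fin n)))
    (𝔅 : Set (Set (EuclideanSpace ℝ (Fin n))))
    (f : EuclideanSpace ℝ (Fin n) → ℝ) (x : EuclideanSpace ℝ (Fin n)) : ℝ≥0∞ :=
  ⨆ (B : Set (EuclideanSpace ℝ (Fin n))) (_ : B ∈ 𝔅) (_ : x ∈ B) (_ : 0 < μ B),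
    (∫⁻ y in B, ENNReal.ofReal |f y| ∂μ) / μ B

/-- A collection of sets is homothecy invariant if it is closed under translations and
positive dilations. -/
def HomothecyInvariant {n : ℕ} (𝔅 : Set (Set (EuclideanSpace ℝ (Fin n)))) : Prop :=
  ∀ B ∈ 𝔅, (∀ y : EuclideanSpace ℝ (Fin n), y +ᵥ B ∈ 𝔅) ∧ (∀ s : ℝ, 0 < s → s • B ∈ 𝔅)

/-- `μ` is doubling with respect to the collection `𝔅`, with constant `Δ`: whenever
`B ∈ 𝔅` and a translate of the dilate `2·B` contains `B`, its measure is at most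
`Δ·μ(B)`. -/
def DoublingWrt {n : ℕ} (μ : Measure (EuclideanSpace ℝ (Fin n)))
    (𝔅 : Set (Set (EuclideanSpace ℝ (Fin n)))) (Δ : ℝ) : Prop :=
  ∀ B ∈ 𝔅, ∀ σ : EuclideanSpace ℝ (Fin n),
    B ⊆ σ +ᵥ (2 : ℝ) • B → μ (σ +ᵥ (2 : ℝ) • B) ≤ ENNReal.ofReal Δ * μ B

/-- A member of a basis of convex sets: nonempty, bounded, open and convex. -/
def IsConvexBasisSet {n : ℕ} (B : Set (EuclideanSpace ℝ (Fin n))) : Prop :=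
  B.Nonempty ∧ Bornology.IsBounded B ∧ IsOpen B ∧ Convex ℝ B

/-- An open axis-parallel rectangle in `ℝⁿ`. -/
def IsAxisRect {n : ℕ} (R : Set (EuclideanSpace ℝ (Fin n))) : Prop :=
  ∃ a b : Fin n → ℝ, (∀ i, a i < b i) ∧ R = {x | ∀ i, x i ∈ Set.Ioo (a i) (b i)}

/-- An open rectangle (possibly rotated rectangular parallelepiped) in `ℝⁿ`:
the image of an open axis-parallel rectangle under a rigid motion. -/
def IsRect {n : ℕ} (R : Set (EuclideanSpace ℝ (Fin n))) : Prop :=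
  ∃ (f : EuclideanSpace ℝ (Fin n) ≃ᵢ EuclideanSpace ℝ (Fin n))
    (S : Set (EuclideanSpace ℝ (Fin n))), IsAxisRect S ∧ R = f '' S

/-- An open axis-parallel cube in `ℝⁿ`. -/
def IsAxisCube {n : ℕ} (C : Set (EuclideanSpace ℝ (Fin n))) : Prop :=
  ∃ (a : Fin n → ℝ) (s : ℝ), 0 < s ∧ C = {x | ∀ i, x i ∈ Set.Ioo (a i) (a i + s)}

/-- `M_{𝔅,μ}` is bounded on `L^p(ν)`. -/
def BoundedOnLp {n : ℕ} (μ ν : Measure (EuclideanSpace ℝ (Fin n)))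
    (𝔅 : Set (Set (EuclideanSpace ℝ (Fin n)))) (p : ℝ) : Prop :=
  ∃ C : ℝ≥0∞, C ≠ ⊤ ∧ ∀ f : EuclideanSpace ℝ (Fin n) → ℝ, Measurable f →
    ∫⁻ x, maxOp μ 𝔅 f x ^ p ∂ν ≤ C * ∫⁻ x, ENNReal.ofReal |f x| ^ p ∂ν

/-- The Tauberian condition for `M_{𝔅,μ}` at level `γ`, with constant `c`, with respect
to the measure `ν`. -/
def TauberianCond {n : ℕ} (μ ν : Measure (EuclideanSpace ℝ (Fin n)))
    (𝔅 : Set (Set (EuclideanSpace ℝ (Fin n)))) (γ c : ℝ) : Prop :=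
  ∀ E : Set (EuclideanSpace ℝ (Fin n)), MeasurableSet E →
    ν {x | ENNReal.ofReal γ < maxOp μ 𝔅 (E.indicator 1) x} ≤ ENNReal.ofReal c * ν E

/-- The standard open dyadic box of scale `2^k` and position `m` in `ℝⁿ`. -/
def stdBox (n : ℕ) (k : ℤ) (m : Fin n → ℤ) : Set (Fin n → ℝ) :=
  {x | ∀ i, (m i : ℝ) * 2 ^ k < x i ∧ x i < ((m i : ℝ) + 1) * 2 ^ k}

/-- A parametrization of a rectangular grid: a rigid motion composed with a positive
diagonal scaling. The image of the standard unit box under such a map is a rectangle. -/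
def IsRectParam {n : ℕ} (T : (Fin n → ℝ) → EuclideanSpace ℝ (Fin n)) : Prop :=
  ∃ (f : EuclideanSpace ℝ (Fin n) ≃ᵢ EuclideanSpace ℝ (Fin n)) (l : Fin n → ℝ),
    (∀ i, 0 < l i) ∧
    ∀ x, T x = f ((WithLp.equiv 2 (Fin n → ℝ)).symm (fun i => l i * x i))

/-- The dyadic mesh generated by a rectangle parametrized by `T`. -/
def dyadicMesh {n : ℕ} (T : (Fin n → ℝ) → EuclideanSpace ℝ (Fin n)) :
    Set (Set (EuclideanSpace ℝ (Fin n))) :=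
  {S | ∃ (k : ℤ) (m : Fin n → ℤ), S = T '' stdBox n k m}

/-- `S` is a dyadic descendant of the rectangle `R`, `s` generations inside `R`. -/
def DyadicDescendant {n : ℕ} (R S : Set (EuclideanSpace ℝ (Fin n))) (s : ℕ) : Prop :=
  ∃ T : (Fin n → ℝ) → EuclideanSpace ℝ (Fin n), IsRectParam T ∧
    T '' stdBox n 0 0 = R ∧
    ∃ m : Fin n → ℤ, (∀ i, 0 ≤ m i ∧ m i < 2 ^ s) ∧ S = T '' stdBox n (-(s : ℤ)) m

/-- The family of all homothetic copies (translates and positive dilates) of `R₀`. -/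
def homCopies {n : ℕ} (R₀ : Set (EuclideanSpace ℝ (Fin n))) :
    Set (Set (EuclideanSpace ℝ (Fin n))) :=
  {S | ∃ (y : EuclideanSpace ℝ (Fin n)) (s : ℝ), 0 < s ∧ S = y +ᵥ s • R₀}

/-- Iterated halo sets `H_β^k(E)`: `H_β^0(E) = E` and
`H_β^{k+1}(E) = {x : M_{𝔊,μ}(1_{H_β^k(E)})(x) ≥ β}`. -/
def Hiter {n : ℕ} (μ : Measure (EuclideanSpace ℝ (Fin n)))
    (𝔊 : Set (Set (EuclideanSpace ℝ (Fin n)))) (β : ℝ)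
    (E : Set (EuclideanSpace ℝ (Fin n))) : ℕ → Set (EuclideanSpace ℝ (Fin n))
  | 0 => E
  | k + 1 => {x | ENNReal.ofReal β ≤ maxOp μ 𝔊 ((Hiter μ 𝔊 β E k).indicator 1) x}

/-- The Muckenhoupt `A_{p,𝔅}` condition for a weight `w` (with respect to Lebesgue
measure); here `1 - p/(p-1) = 1 - p'`. -/
def MuckenhouptAp {n : ℕ} (𝔅 : Set (Set (EuclideanSpace ℝ (Fin n))))
    (w : EuclideanSpace ℝ (Fin n) → ℝ) (p : ℝ) : Prop :=
  ∃ C : ℝ≥0∞, C ≠ ⊤ ∧ ∀ B ∈ 𝔅,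
    ((∫⁻ x in B, ENNReal.ofReal (w x) ∂volume) / volume B) *
      (((∫⁻ x in B, ENNReal.ofReal (w x) ^ (1 - p / (p - 1)) ∂volume) / volume B) ^ (p - 1))
      ≤ C

/-- `𝔅` is a Muckenhoupt basis: for every `1 < p < ∞` and every weight `w ∈ A_{p,𝔅}`,
the maximal operator `M_𝔅` is bounded on `L^p(w)`. -/
def MuckenhouptBasis {n : ℕ} (𝔅 : Set (Set (EuclideanSpace ℝ (Fin n)))) : Prop :=
  ∀ p : ℝ, 1 < p → ∀ w : EuclideanSpace ℝ (Fin n) → ℝ, (∀ x, 0 ≤ w x) →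
    LocallyIntegrable w volume → MuckenhouptAp 𝔅 w p →
    BoundedOnLp volume (volume.withDensity fun x => ENNReal.ofReal (w x)) 𝔅 p

end

namespace TB
variable {n : ℕ}

def orect (a b : Fin n → ℝ) : Set (EuclideanSpace ℝ (Fin n)) :=
  {x | ∀ i, x i ∈ Set.Ioo (a i) (b i)}

lemma isOpen_orect (a b : Fin n → ℝ) : IsOpen (orect a b) := by
  have : orect a b = ⋂ i, (fun x : EuclideanSpace ℝ (Fin n) => x i) ⁻¹' Ioo (a i) (b i) := by
    ext x; simp [orect]
  rw [this]
  exact isOpen_iInter_of_finite fun i => isOpen_Ioo.preimage (by fun_prop)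

lemma measurable_orect (a b : Fin n → ℝ) : MeasurableSet (orect a b) :=
  (isOpen_orect a b).measurableSet

lemma orect_lt_top (μ : Measure (EuclideanSpace ℝ (Fin n))) [IsLocallyFiniteMeasure μ]
    (a b : Fin n → ℝ) : μ (orect a b) < ⊤ := by
  have hc : IsCompact ((WithLp.toLp 2) '' (Set.Icc a b) : Set (EuclideanSpace ℝ (Fin n))) :=
    isCompact_Icc.image (PiLp.continuous_toLp 2 _)
  refine lt_of_le_of_lt (measure_mono ?_) hc.measure_lt_top
  intro x hx
  refine ⟨WithLp.ofLp x, ⟨fun i => (hx i).1.le, fun i => (hx i).2.le⟩, rfl⟩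

lemma orect_mono {a b a' b' : Fin n → ℝ} (h1 : ∀ i, a' i ≤ a i) (h2 : ∀ i, b i ≤ b' i) :
    orect a b ⊆ orect a' b' := fun _ hx i =>
  ⟨(h1 i).trans_lt (hx i).1, (hx i).2.trans_le (h2 i)⟩

lemma doub {μ : Measure (EuclideanSpace ℝ (Fin n))} {Δ : ℝ}
    (hd : DoublingWrt μ {R | IsAxisRect R} Δ) {a b a' b' : Fin n → ℝ} (hab : ∀ i, a i < b i)
    (h1 : ∀ i, a' i ≤ a i) (h2 : ∀ i, b i ≤ b' i) (h3 : ∀ i, b' i - a' i = 2 * (b i - a i)) :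
    μ (orect a' b') ≤ ENNReal.ofReal Δ * μ (orect a b) := by
  have key : (WithLp.toLp 2 (fun i => a' i - 2 * a i) : EuclideanSpace ℝ (Fin n)) +ᵥ
      (2 : ℝ) • orect a b = orect a' b' := by
    ext x
    rw [Set.mem_vadd_set_iff_neg_vadd_mem, Set.mem_smul_set_iff_inv_smul_mem₀ two_ne_zero]
    simp only [orect, mem_setOf_eq]
    refine forall_congr' fun i => ?_
    have := h3 i
    simp only [vadd_eq_add, PiLp.smul_apply, PiLp.add_apply, PiLp.neg_apply, smul_eq_mul, mem_Ioo]
    constructor <;> rintro ⟨h, h'⟩ <;> constructor <;> linarith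
  have := hd (orect a b) ⟨a, b, hab, rfl⟩ (WithLp.toLp 2 (fun i => a' i - 2 * a i))
  rw [key] at this
  exact this (orect_mono h1 h2)

lemma orect_pos {μ : Measure (EuclideanSpace ℝ (Fin n))} (hμ : μ ≠ 0) {Δ : ℝ}
    (hd : DoublingWrt μ {R | IsAxisRect R} Δ) {a b : Fin n → ℝ} (hab : ∀ i, a i < b i) :
    0 < μ (orect a b) := by
  rw [pos_iff_ne_zero]
  intro h0
  apply hμ
  let A : ℕ → Fin n → ℝ := fun k i => (a i + b i) / 2 - 2 ^ k * ((b i - a i) / 2)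
  let B : ℕ → Fin n → ℝ := fun k i => (a i + b i) / 2 + 2 ^ k * ((b i - a i) / 2)
  have hk : ∀ k, μ (orect (A k) (B k)) = 0 := by
    intro k
    induction k with
    | zero =>
      have e1 : A 0 = a := by ext i; simp only [A]; ring
      have e2 : B 0 = b := by ext i; simp only [B]; ring
      rw [e1, e2, h0]
    | succ k ih =>
      have hp : ∀ i, 0 < (2:ℝ) ^ k * ((b i - a i) / 2) := fun i => by
        have := hab i
        have : 0 < (b i - a i) / 2 := by linarith
        positivity
      have := doub hd (a := A k) (b := B k) (a' := A (k+1)) (b' := B (k+1))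
        (fun i => by have := hp i; simp only [A, B]; linarith)
        (fun i => by have := hp i; simp only [A, pow_succ]; linarith)
        (fun i => by have := hp i; simp only [B, pow_succ]; linarith)
        (fun i => by simp only [A, B, pow_succ]; ring)
      rw [ih, mul_zero] at this
      exact le_antisymm this zero_le
  rw [← Measure.measure_univ_eq_zero]
  have hU : (univ : Set (EuclideanSpace ℝ (Fin n))) = ⋃ k, orect (A k) (B k) := by
    symm
    rw [eq_univ_iff_forall]
    intro x
    have : ∀ i, ∀ᶠ k : ℕ in atTop, x i ∈ Ioo (A k i) (B k i) := by
      intro i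
      have hh : 0 < (b i - a i) / 2 := by have := hab i; linarith
      have ht : Tendsto (fun k : ℕ => (2:ℝ)^k * ((b i - a i)/2)) atTop atTop :=
        (tendsto_pow_atTop_atTop_of_one_lt one_lt_two).atTop_mul_const hh
      filter_upwards [ht.eventually_gt_atTop (|x i - (a i + b i)/2|)] with k hk
      rw [abs_lt] at hk
      simp only [A, B, mem_Ioo]
      constructor <;> linarith [hk.1, hk.2]
    obtain ⟨k, hk⟩ := (eventually_all.2 this).exists
    exact mem_iUnion.2 ⟨k, hk⟩
  rw [hU]
  exact measure_iUnion_null hk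

lemma hyper_null {μ : Measure (EuclideanSpace ℝ (Fin n))} [IsLocallyFiniteMeasure μ] {Δ : ℝ}
    (hd : DoublingWrt μ {R | IsAxisRect R} Δ) (i : Fin n) (c : ℝ) :
    μ {x | x i = c} = 0 := by
  classical
  have hN : ∀ N : ℕ, μ {x | x i = c ∧ ∀ j, |x j| < (N:ℝ) + 1} = 0 := by
    intro N
    let A : ℕ → Fin n → ℝ := fun _ j => if j = i then c else -((N:ℝ)+1)
    let B : ℕ → Fin n → ℝ := fun m j => if j = i then c + 1 / ((m:ℝ)+1) else (N:ℝ)+1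
    let A' : ℕ → Fin n → ℝ := fun m j => if j = i then c - 1 / ((m:ℝ)+1) / 2 else -(2*((N:ℝ)+1))
    let B' : ℕ → Fin n → ℝ := fun m j =>
      if j = i then c + 3 * (1 / ((m:ℝ)+1)) / 2 else 2*((N:ℝ)+1)
    have hle : ∀ m, μ {x | x i = c ∧ ∀ j, |x j| < (N:ℝ) + 1} ≤
        ENNReal.ofReal Δ * μ (orect (A m) (B m)) := by
      intro m
      have hm : 0 < 1 / ((m:ℝ)+1) := by positivity
      have hNp : 0 < (N:ℝ) + 1 := by positivity
      refine le_trans (measure_mono ?_) (doub hd (a := A m) (b := B m) (a' := A' m) (b' := B' m)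
        ?_ ?_ ?_ ?_)
      · rintro x ⟨hx, hx'⟩ j
        by_cases hj : j = i
        · subst hj
          simp only [A', B', if_true, mem_Ioo, hx]
          constructor <;> linarith
        · have := hx' j
          rw [abs_lt] at this
          simp only [A', B', hj, if_false, mem_Ioo]
          constructor <;> linarith [this.1, this.2]
      all_goals
        intro j
        by_cases hj : j = i <;> simp only [A, B, A', B', hj, if_true, if_false] <;> linarith
    have ht : Tendsto (fun m => μ (orect (A m) (B m))) atTop (𝓝 0) := by
      have hemp : (⋂ m, orect (A m) (B m)) = ∅ := by
        rw [eq_empty_iff_forall_notMem]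
        intro x hx
        rw [mem_iInter] at hx
        have h0 := (hx 0 i).1
        simp only [A, if_true] at h0
        obtain ⟨m, hm⟩ := exists_nat_one_div_lt (sub_pos.2 h0)
        have := (hx m i).2
        simp only [B, if_true] at this
        linarith
      rw [← measure_empty (μ := μ), ← hemp]
      refine tendsto_measure_iInter_atTop (fun m => (measurable_orect _ _).nullMeasurableSet) ?_
        ⟨0, (orect_lt_top μ _ _).ne⟩
      intro m m' hmm
      refine orect_mono (fun j => le_rfl) (fun j => ?_)
      simp only [B]
      split_ifs
      · have : 1 / ((m':ℝ)+1) ≤ 1 / ((m:ℝ)+1) := by gcongr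
        linarith
      · exact le_rfl
    have ht2 := ENNReal.Tendsto.const_mul (a := ENNReal.ofReal Δ) ht (Or.inr ENNReal.ofReal_ne_top)
    rw [mul_zero] at ht2
    exact le_antisymm (ge_of_tendsto' ht2 hle) zero_le
  have : {x : EuclideanSpace ℝ (Fin n) | x i = c} ⊆
      ⋃ N : ℕ, {x | x i = c ∧ ∀ j, |x j| < (N:ℝ) + 1} := by
    intro x hx
    obtain ⟨N, hN⟩ := exists_nat_gt ‖x‖
    refine mem_iUnion.2 ⟨N, hx, fun j => ?_⟩
    have := PiLp.norm_apply_le x j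
    rw [Real.norm_eq_abs] at this
    linarith
  exact measure_mono_null this (measure_iUnion_null hN)

lemma lt_maxOp_iff {μ : Measure (EuclideanSpace ℝ (Fin n))} [IsLocallyFiniteMeasure μ]
    (hpos : ∀ a b : Fin n → ℝ, (∀ i, a i < b i) → 0 < μ (orect a b))
    (f : EuclideanSpace ℝ (Fin n) → ℝ) (x : EuclideanSpace ℝ (Fin n)) (c : ℝ≥0∞) :
    c < maxOp μ {R | IsAxisRect R} f x ↔ ∃ a b : Fin n → ℝ, (∀ i, a i < b i) ∧ x ∈ orect a b ∧
      c * μ (orect a b) < ∫⁻ y in orect a b, ENNReal.ofReal |f y| ∂μ := by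
  unfold maxOp
  simp only [lt_iSup_iff, mem_setOf_eq]
  constructor
  · rintro ⟨B, ⟨a, b, hab, rfl⟩, hx, h0, h⟩
    refine ⟨a, b, hab, hx, ?_⟩
    rwa [ENNReal.lt_div_iff_mul_lt (Or.inl h0.ne') (Or.inl (orect_lt_top μ a b).ne)] at h
  · rintro ⟨a, b, hab, hx, h⟩
    refine ⟨_, ⟨a, b, hab, rfl⟩, hx, hpos a b hab, ?_⟩
    exact (ENNReal.lt_div_iff_mul_lt (Or.inl (hpos a b hab).ne')
      (Or.inl (orect_lt_top μ a b).ne)).2 h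

lemma isOpen_lt_maxOp {μ : Measure (EuclideanSpace ℝ (Fin n))} [IsLocallyFiniteMeasure μ]
    (hpos : ∀ a b : Fin n → ℝ, (∀ i, a i < b i) → 0 < μ (orect a b))
    (f : EuclideanSpace ℝ (Fin n) → ℝ) (c : ℝ≥0∞) :
    IsOpen {x | c < maxOp μ {R | IsAxisRect R} f x} := by
  rw [isOpen_iff_forall_mem_open]
  intro x hx
  obtain ⟨a, b, hab, hxm, h⟩ := (lt_maxOp_iff hpos f x c).1 hx
  exact ⟨orect a b, fun y hy => (lt_maxOp_iff hpos f y c).2 ⟨a, b, hab, hy, h⟩,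
    isOpen_orect a b, hxm⟩

lemma lint_ind {μ : Measure (EuclideanSpace ℝ (Fin n))}
    {E : Set (EuclideanSpace ℝ (Fin n))} (hE : MeasurableSet E) (B : Set (EuclideanSpace ℝ (Fin n))) :
    ∫⁻ y in B, ENNReal.ofReal |E.indicator (1 : EuclideanSpace ℝ (Fin n) → ℝ) y| ∂μ
      = μ (E ∩ B) := by
  have : (fun y => ENNReal.ofReal |E.indicator (1 : EuclideanSpace ℝ (Fin n) → ℝ) y|)
      = E.indicator 1 := by
    ext y
    by_cases h : y ∈ E <;> simp [h]
  rw [this, lintegral_indicator_one hE, Measure.restrict_apply hE]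

lemma lt_maxOp_ind_iff {μ : Measure (EuclideanSpace ℝ (Fin n))} [IsLocallyFiniteMeasure μ]
    (hpos : ∀ a b : Fin n → ℝ, (∀ i, a i < b i) → 0 < μ (orect a b))
    {E : Set (EuclideanSpace ℝ (Fin n))} (hE : MeasurableSet E) (x : EuclideanSpace ℝ (Fin n))
    (c : ℝ≥0∞) :
    c < maxOp μ {R | IsAxisRect R} (E.indicator 1) x ↔
      ∃ a b : Fin n → ℝ, (∀ i, a i < b i) ∧ x ∈ orect a b ∧
      c * μ (orect a b) < μ (E ∩ orect a b) := by
  rw [lt_maxOp_iff hpos]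
  simp only [lint_ind hE]

end TB
namespace TB
variable {n : ℕ}

def halo (μ : Measure (EuclideanSpace ℝ (Fin n))) (E : Set (EuclideanSpace ℝ (Fin n))) :
    Set (EuclideanSpace ℝ (Fin n)) :=
  {x | (1 / 2 : ℝ≥0∞) < maxOp μ {R | IsAxisRect R} (E.indicator 1) x}

lemma isOpen_halo {μ : Measure (EuclideanSpace ℝ (Fin n))} [IsLocallyFiniteMeasure μ]
    (hpos : ∀ a b : Fin n → ℝ, (∀ i, a i < b i) → 0 < μ (orect a b))
    (E : Set (EuclideanSpace ℝ (Fin n))) : IsOpen (halo μ E) :=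
  isOpen_lt_maxOp hpos _ _

lemma half_mul_lt {x y : ℝ≥0∞} (h : x < 2 * y) : 1 / 2 * x < y := by
  rw [one_div, mul_comm, ← div_eq_mul_inv]
  exact ENNReal.div_lt_of_lt_mul' h

lemma rect_sub_halo {μ : Measure (EuclideanSpace ℝ (Fin n))} [IsLocallyFiniteMeasure μ]
    (hpos : ∀ a b : Fin n → ℝ, (∀ i, a i < b i) → 0 < μ (orect a b))
    {E : Set (EuclideanSpace ℝ (Fin n))} (hE : MeasurableSet E) {a b : Fin n → ℝ}
    (hab : ∀ i, a i < b i) (h : μ (orect a b) < 2 * μ (E ∩ orect a b)) :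
    orect a b ⊆ halo μ E := fun x hx =>
  (lt_maxOp_ind_iff hpos hE x _).2 ⟨a, b, hab, hx, half_mul_lt h⟩

lemma exists_orect_sub {E : Set (EuclideanSpace ℝ (Fin n))} (hE : IsOpen E)
    {x : EuclideanSpace ℝ (Fin n)} (hx : x ∈ E) :
    ∃ a b : Fin n → ℝ, (∀ i, a i < b i) ∧ x ∈ orect a b ∧ orect a b ⊆ E := by
  have ho : IsOpen ((WithLp.toLp 2 : (Fin n → ℝ) → EuclideanSpace ℝ (Fin n)) ⁻¹' E) :=
    hE.preimage (PiLp.continuous_toLp 2 _)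
  obtain ⟨ε, hε, hb⟩ := Metric.isOpen_iff.1 ho (WithLp.ofLp x) hx
  refine ⟨fun i => x i - ε, fun i => x i + ε, fun i => by linarith, fun i => ?_, ?_⟩
  · constructor <;> linarith
  · intro y hy
    have : WithLp.ofLp y ∈ Metric.ball (WithLp.ofLp x) ε := by
      rw [Metric.mem_ball, dist_pi_lt_iff hε]
      intro i
      rw [Real.dist_eq, abs_lt]
      have := hy i
      constructor <;> linarith [this.1, this.2]
    exact hb this

lemma lt_two_mul {x : ℝ≥0∞} (h : 0 < x) (h' : x < ⊤) : x < 2 * x := by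
  rw [two_mul]
  exact ENNReal.lt_add_right h'.ne h.ne'

lemma subset_halo {μ : Measure (EuclideanSpace ℝ (Fin n))} [IsLocallyFiniteMeasure μ]
    (hpos : ∀ a b : Fin n → ℝ, (∀ i, a i < b i) → 0 < μ (orect a b))
    {E : Set (EuclideanSpace ℝ (Fin n))} (hE : IsOpen E) : E ⊆ halo μ E := by
  intro x hx
  obtain ⟨a, b, hab, hxm, hs⟩ := exists_orect_sub hE hx
  refine rect_sub_halo hpos hE.measurableSet hab ?_ hxm
  rw [inter_eq_right.2 hs]
  exact lt_two_mul (hpos a b hab) (orect_lt_top μ a b)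

lemma isOpen_iter {μ : Measure (EuclideanSpace ℝ (Fin n))} [IsLocallyFiniteMeasure μ]
    (hpos : ∀ a b : Fin n → ℝ, (∀ i, a i < b i) → 0 < μ (orect a b))
    {E : Set (EuclideanSpace ℝ (Fin n))} (hE : IsOpen E) (k : ℕ) : IsOpen ((halo μ)^[k] E) := by
  cases k with
  | zero => exact hE
  | succ k => rw [Function.iterate_succ_apply']; exact isOpen_halo hpos _

lemma iter_mono {μ : Measure (EuclideanSpace ℝ (Fin n))} [IsLocallyFiniteMeasure μ]
    (hpos : ∀ a b : Fin n → ℝ, (∀ i, a i < b i) → 0 < μ (orect a b))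
    {E : Set (EuclideanSpace ℝ (Fin n))} (hE : IsOpen E) :
    Monotone fun k => (halo μ)^[k] E := by
  refine monotone_nat_of_le_succ fun k => ?_
  rw [Function.iterate_succ_apply']
  exact subset_halo hpos (isOpen_iter hpos hE k)

lemma cont_path {μ : Measure (EuclideanSpace ℝ (Fin n))} [IsLocallyFiniteMeasure μ]
    (hnull : ∀ (i : Fin n) (c : ℝ), μ {x | x i = c} = 0) {A B : ℝ → Fin n → ℝ}
    (hA : ∀ i, Continuous fun t => A t i) (hB : ∀ i, Continuous fun t => B t i)
    {a' b' : Fin n → ℝ} {t : ℝ}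
    (hsub : ∀ᶠ s in 𝓝 t, orect (A s) (B s) ⊆ orect a' b') :
    ContinuousAt (fun s => μ.real (orect (A s) (B s))) t := by
  refine (ENNReal.tendsto_toReal (orect_lt_top μ _ _).ne).comp ?_
  refine tendsto_measure_of_ae_tendsto_indicator (𝓝 t) (measurable_orect _ _)
    (fun s => measurable_orect _ _) (measurable_orect a' b') (orect_lt_top μ _ _).ne hsub ?_
  have hae : ∀ᵐ x ∂μ, ∀ i, x i ≠ A t i ∧ x i ≠ B t i := by
    rw [ae_all_iff]
    intro i
    refine Filter.Eventually.and ?_ ?_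
    · rw [ae_iff]; simpa using hnull i (A t i)
    · rw [ae_iff]; simpa using hnull i (B t i)
  filter_upwards [hae] with x hx
  have h1 : ∀ i, ∀ᶠ s in 𝓝 t, (x i ∈ Ioo (A s i) (B s i) ↔ x i ∈ Ioo (A t i) (B t i)) := by
    intro i
    have e1 : ∀ᶠ s in 𝓝 t, (A s i < x i ↔ A t i < x i) := by
      rcases lt_or_gt_of_ne (hx i).1 with h | h
      · filter_upwards [(hA i).continuousAt.eventually (lt_mem_nhds h)] with s hs
        exact iff_of_false hs.not_gt h.not_gt
      · filter_upwards [(hA i).continuousAt.eventually (gt_mem_nhds h)] with s hs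
        exact iff_of_true hs h
    have e2 : ∀ᶠ s in 𝓝 t, (x i < B s i ↔ x i < B t i) := by
      rcases lt_or_gt_of_ne (hx i).2 with h | h
      · filter_upwards [(hB i).continuousAt.eventually (lt_mem_nhds h)] with s hs
        exact iff_of_true hs h
      · filter_upwards [(hB i).continuousAt.eventually (gt_mem_nhds h)] with s hs
        exact iff_of_false hs.not_gt h.not_gt
    filter_upwards [e1, e2] with s h1 h2
    rw [mem_Ioo, mem_Ioo, h1, h2]
  filter_upwards [eventually_all.2 h1] with s hs
  exact forall_congr' hs

lemma growth {μ : Measure (EuclideanSpace ℝ (Fin n))} [IsLocallyFiniteMeasure μ]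
    (hpos : ∀ a b : Fin n → ℝ, (∀ i, a i < b i) → 0 < μ (orect a b))
    (hnull : ∀ (i : Fin n) (c : ℝ), μ {x | x i = c} = 0)
    {G : Set (EuclideanSpace ℝ (Fin n))} (hG : IsOpen G) {a b a' b' : Fin n → ℝ}
    (hab : ∀ i, a i < b i) (h1 : ∀ i, a' i ≤ a i) (h2 : ∀ i, b i ≤ b' i)
    {Δ : ℝ} (hΔ : 1 < Δ) (hm : μ (orect a' b') ≤ ENNReal.ofReal Δ * μ (orect a b))
    (hS : orect a b ⊆ G) {k : ℕ} (hk : Δ < (3 / 2 : ℝ) ^ k) :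
    orect a' b' ⊆ (halo μ)^[k] G := by
  let A : ℝ → Fin n → ℝ := fun t i => a i - t * (a i - a' i)
  let B : ℝ → Fin n → ℝ := fun t i => b i + t * (b' i - b i)
  let g : ℝ → ℝ := fun t => μ.real (orect (A t) (B t))
  have hABm : ∀ s t, s ≤ t → orect (A s) (B s) ⊆ orect (A t) (B t) := fun s t hst =>
    orect_mono (fun i => by simp only [A]; nlinarith [h1 i]) (fun i => by
      simp only [B]; nlinarith [h2 i])
  have hAB : ∀ t, 0 ≤ t → ∀ i, A t i < B t i := fun t ht i => by
    simp only [A, B]; nlinarith [h1 i, h2 i, hab i]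
  have hgc : Continuous g := continuous_iff_continuousAt.2 fun t =>
    cont_path hnull (fun i => by fun_prop) (fun i => by fun_prop) (a' := A (t+1)) (b' := B (t+1))
      (by filter_upwards [gt_mem_nhds (lt_add_one t)] with s hs; exact hABm s _ hs.le)
  have hgm : ∀ s t, s ≤ t → g s ≤ g t := fun s t hst =>
    measureReal_mono (hABm s t hst) (orect_lt_top μ _ _).ne
  have hgp : ∀ t, 0 ≤ t → 0 < g t := fun t ht =>
    ENNReal.toReal_pos (hpos _ _ (hAB t ht)).ne' (orect_lt_top μ _ _).ne
  have A0 : A 0 = a := by ext i; simp [A]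
  have B0 : B 0 = b := by ext i; simp [B]
  have A1 : A 1 = a' := by ext i; simp [A]
  have B1 : B 1 = b' := by ext i; simp [B]
  have hg1 : g 1 ≤ Δ * g 0 := by
    simp only [g, A0, B0, A1, B1, Measure.real]
    have := ENNReal.toReal_mono (ENNReal.mul_ne_top ENNReal.ofReal_ne_top
      (orect_lt_top μ a b).ne) hm
    rwa [ENNReal.toReal_mul, ENNReal.toReal_ofReal (by linarith)] at this
  have hstep : ∀ (H : Set (EuclideanSpace ℝ (Fin n))) (s t : ℝ), IsOpen H → 0 ≤ s → s ≤ t →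
      g t ≤ 3 / 2 * g s → orect (A s) (B s) ⊆ H → orect (A t) (B t) ⊆ halo μ H := by
    intro H s t hH hs hst hg hsub
    refine rect_sub_halo hpos hH.measurableSet (hAB t (hs.trans hst)) ?_
    have h3 : orect (A s) (B s) ⊆ H ∩ orect (A t) (B t) := subset_inter hsub (hABm s t hst)
    refine lt_of_lt_of_le ?_ (mul_le_mul_right (measure_mono h3) 2)
    rw [← ENNReal.toReal_lt_toReal (orect_lt_top μ _ _).ne
      (ENNReal.mul_ne_top (by simp) (orect_lt_top μ _ _).ne), ENNReal.toReal_mul]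
    have := hgp s hs
    change g t < (2:ℝ≥0∞).toReal * g s
    simp only [ENNReal.toReal_ofNat]
    linarith
  have claim : ∀ j : ℕ, ∃ t, 0 ≤ t ∧ t ≤ 1 ∧ orect (A t) (B t) ⊆ (halo μ)^[j] G ∧
      (t = 1 ∨ (3/2:ℝ)^j * g 0 ≤ g t) := by
    intro j
    induction j with
    | zero => exact ⟨0, le_rfl, zero_le_one, by rw [A0, B0]; exact hS, Or.inr (by simp)⟩
    | succ j ih =>
      obtain ⟨t, ht0, ht1, hts, h⟩ := ih
      rw [Function.iterate_succ_apply']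
      have ho := isOpen_iter hpos hG j
      rcases h with rfl | h
      · exact ⟨1, ht0, le_rfl, hts.trans (subset_halo hpos ho), Or.inl rfl⟩
      · by_cases hc : g 1 ≤ 3 / 2 * g t
        · exact ⟨1, zero_le_one, le_rfl, hstep _ t 1 ho ht0 ht1 hc hts, Or.inl rfl⟩
        · have hgt := hgp t ht0
          obtain ⟨s, ⟨hs1, hs2⟩, hs⟩ := intermediate_value_Icc ht1 hgc.continuousOn
            (show 3 / 2 * g t ∈ Icc (g t) (g 1) from ⟨by linarith, by linarith⟩)
          refine ⟨s, ht0.trans hs1, hs2, hstep _ t s ho ht0 hs1 hs.le hts, Or.inr ?_⟩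
          rw [hs, pow_succ]; linarith
  obtain ⟨t, ht0, ht1, hts, h⟩ := claim k
  rcases h with rfl | h
  · rwa [A1, B1] at hts
  · exfalso
    have := hgp 0 le_rfl
    have h4 := hgm t 1 ht1
    nlinarith

open BoxIntegral in
lemma split_le {μ : Measure (EuclideanSpace ℝ (Fin n))}
    (hnull : ∀ (i : Fin n) (c : ℝ), μ {x | x i = c} = 0)
    (J : Box (Fin n)) (K : Set (EuclideanSpace ℝ (Fin n))) :
    μ (K ∩ orect J.lower J.upper) ≤
      ∑ s : Set (Fin n), μ (K ∩ orect (J.splitCenterBox s).lower (J.splitCenterBox s).upper) := by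
  have hsub : K ∩ orect J.lower J.upper ⊆
      (⋃ s : Set (Fin n), K ∩ orect (J.splitCenterBox s).lower (J.splitCenterBox s).upper) ∪
      ⋃ i, {x | x i = (J.lower i + J.upper i) / 2} := by
    rintro x ⟨hxK, hx⟩
    by_cases h : ∃ i, x i = (J.lower i + J.upper i) / 2
    · exact Or.inr (mem_iUnion.2 h)
    · push Not at h
      refine Or.inl (mem_iUnion.2 ⟨{i | (J.lower i + J.upper i) / 2 < x i}, hxK, fun i => ?_⟩)
      by_cases hi : (J.lower i + J.upper i) / 2 < x i
      · simpa [Box.splitCenterBox, Set.piecewise, hi] using (hx i).2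
      · simpa [Box.splitCenterBox, Set.piecewise, hi] using
          ⟨(hx i).1, lt_of_le_of_ne (not_lt.1 hi) (h i)⟩
  refine (measure_mono hsub).trans ((measure_union_le _ _).trans ?_)
  rw [measure_iUnion_null fun i => hnull i _, add_zero]
  exact measure_iUnion_fintype_le μ _

open BoxIntegral in
lemma split_ge {μ : Measure (EuclideanSpace ℝ (Fin n))}
    (J : Box (Fin n)) {H : Set (EuclideanSpace ℝ (Fin n))} (hH : MeasurableSet H) :
      ∑ s : Set (Fin n), μ (H ∩ orect (J.splitCenterBox s).lower (J.splitCenterBox s).upper)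
      ≤ μ (H ∩ orect J.lower J.upper) := by
  have hmem : ∀ (L : Box (Fin n)) (x : EuclideanSpace ℝ (Fin n)), x ∈ orect L.lower L.upper →
      WithLp.ofLp x ∈ (L : Set (Fin n → ℝ)) := fun L x hx i => ⟨(hx i).1, (hx i).2.le⟩
  rw [← tsum_fintype (L := .unconditional _), ← measure_iUnion]
  · refine measure_mono (iUnion_subset fun s => inter_subset_inter_right _ ?_)
    have := Box.le_iff_bounds.1 (J.splitCenterBox_le s)
    exact orect_mono this.1 this.2
  · intro s t hst
    rw [Function.onFun, Set.disjoint_left]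
    rintro x ⟨-, hx⟩ ⟨-, hx'⟩
    exact Set.disjoint_left.1 (J.disjoint_splitCenterBox hst) (hmem _ x hx) (hmem _ x hx')
  · exact fun s => hH.inter (measurable_orect _ _)

open BoxIntegral in
lemma key {μ : Measure (EuclideanSpace ℝ (Fin n))} [IsLocallyFiniteMeasure μ]
    (hpos : ∀ a b : Fin n → ℝ, (∀ i, a i < b i) → 0 < μ (orect a b))
    (hnull : ∀ (i : Fin n) (c : ℝ), μ {x | x i = c} = 0)
    {Δ : ℝ} (hΔ : 1 < Δ) (hd : DoublingWrt μ {R | IsAxisRect R} Δ)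
    {k : ℕ} (hk : Δ < (3 / 2 : ℝ) ^ k)
    {E : Set (EuclideanSpace ℝ (Fin n))} (hE : IsOpen E) {a b : Fin n → ℝ}
    (hab : ∀ i, a i < b i) :
    μ (orect a b) < 2 * μ (E ∩ orect a b) ∨
      2 * μ (E ∩ orect a b) ≤ μ ((halo μ)^[k+1] E ∩ orect a b) := by
  by_cases hfirst : μ (orect a b) < 2 * μ (E ∩ orect a b)
  · exact Or.inl hfirst
  right
  have hH := isOpen_iter hpos hE (k+1)
  have hKey : ∀ K ⊆ E, IsCompact K → 2 * μ (K ∩ orect a b) ≤ μ ((halo μ)^[k+1] E ∩ orect a b) := by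
    intro K hKE hK
    let P : Box (Fin n) → Prop := fun J =>
      μ (orect J.lower J.upper) < 2 * μ (E ∩ orect J.lower J.upper) ∨
      2 * μ (K ∩ orect J.lower J.upper) ≤ μ ((halo μ)^[k+1] E ∩ orect J.lower J.upper)
    have hP : P ⟨a, b, hab⟩ := by
      refine Box.subbox_induction_on' (p := P) ⟨a, b, hab⟩ ?_ ?_
      · intro J _ hJ
        by_cases hJ1 : μ (orect J.lower J.upper) < 2 * μ (E ∩ orect J.lower J.upper)
        · exact Or.inl hJ1
        right
        by_cases hs : ∃ s, μ (orect (J.splitCenterBox s).lower (J.splitCenterBox s).upper) <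
            2 * μ (E ∩ orect (J.splitCenterBox s).lower (J.splitCenterBox s).upper)
        · obtain ⟨s, hs⟩ := hs
          have hle := Box.le_iff_bounds.1 (J.splitCenterBox_le s)
          have hsub := rect_sub_halo hpos hE.measurableSet
            (J.splitCenterBox s).lower_lt_upper hs
          have hg := growth hpos hnull (isOpen_halo hpos E) (J.splitCenterBox s).lower_lt_upper
            hle.1 hle.2 hΔ (doub hd (J.splitCenterBox s).lower_lt_upper hle.1 hle.2
              (fun i => by rw [Box.upper_sub_lower_splitCenterBox]; ring)) hsub hk
          rw [Function.iterate_succ_apply, inter_eq_right.2 hg]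
          refine le_trans ?_ (not_lt.1 hJ1)
          gcongr
        · push Not at hs
          have h2 : ∀ s, 2 * μ (K ∩ orect (J.splitCenterBox s).lower (J.splitCenterBox s).upper) ≤
              μ ((halo μ)^[k+1] E ∩
                orect (J.splitCenterBox s).lower (J.splitCenterBox s).upper) :=
            fun s => (hJ s).resolve_left (not_lt.2 (hs s))
          calc _ ≤ 2 * ∑ s : Set (Fin n),
                μ (K ∩ orect (J.splitCenterBox s).lower (J.splitCenterBox s).upper) := by
                gcongr; exact split_le hnull J K
            _ ≤ _ := by
              rw [Finset.mul_sum]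
              exact (Finset.sum_le_sum fun s _ => h2 s).trans (split_ge J hH.measurableSet)
      · intro z _
        have hIcc : ∀ (J : Box (Fin n)) (x : EuclideanSpace ℝ (Fin n)),
            x ∈ orect J.lower J.upper → WithLp.ofLp x ∈ Box.Icc J := fun J x hx =>
          ⟨fun i => (hx i).1.le, fun i => (hx i).2.le⟩
        by_cases hz : (WithLp.toLp 2 z : EuclideanSpace ℝ (Fin n)) ∈ E
        · refine ⟨(WithLp.toLp 2 : (Fin n → ℝ) → EuclideanSpace ℝ (Fin n)) ⁻¹' E,
            mem_nhdsWithin_of_mem_nhds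
              ((hE.preimage (PiLp.continuous_toLp 2 _)).mem_nhds hz), ?_⟩
          intro J _ m _ hJU _
          left
          have hs : orect J.lower J.upper ⊆ E := fun x hx => hJU (hIcc J x hx)
          rw [inter_eq_right.2 hs]
          exact lt_two_mul (hpos _ _ J.lower_lt_upper) (orect_lt_top μ _ _)
        · refine ⟨(WithLp.toLp 2 : (Fin n → ℝ) → EuclideanSpace ℝ (Fin n)) ⁻¹' Kᶜ,
            mem_nhdsWithin_of_mem_nhds
              ((hK.isClosed.isOpen_compl.preimage (PiLp.continuous_toLp 2 _)).mem_nhds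
                (fun h => hz (hKE h))), ?_⟩
          intro J _ m _ hJU _
          right
          have hs : K ∩ orect J.lower J.upper = ∅ := by
            rw [eq_empty_iff_forall_notMem]
            rintro x ⟨hxK, hx⟩
            exact hJU (hIcc J x hx) hxK
          simp [hs]
    exact hP.resolve_left (fun h => hfirst (h.trans_le (by gcongr)))
  rw [mul_comm, ← ENNReal.le_div_iff_mul_le (by simp) (by simp)]
  refine le_of_forall_lt fun r hr => ?_
  obtain ⟨K, hKs, hK, hrK⟩ := (hE.inter (isOpen_orect a b)).exists_lt_isCompact hr
  refine hrK.trans_le ?_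
  rw [ENNReal.le_div_iff_mul_le (by simp) (by simp), mul_comm]
  have := hKey K (hKs.trans inter_subset_left) hK
  rwa [inter_eq_left.2 (hKs.trans inter_subset_right)] at this

lemma iter_cover {μ : Measure (EuclideanSpace ℝ (Fin n))} [IsLocallyFiniteMeasure μ]
    (hpos : ∀ a b : Fin n → ℝ, (∀ i, a i < b i) → 0 < μ (orect a b))
    (hnull : ∀ (i : Fin n) (c : ℝ), μ {x | x i = c} = 0)
    {Δ : ℝ} (hΔ : 1 < Δ) (hd : DoublingWrt μ {R | IsAxisRect R} Δ)
    {k : ℕ} (hk : Δ < (3 / 2 : ℝ) ^ k) {a b : Fin n → ℝ}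
    (hab : ∀ i, a i < b i) (m : ℕ) :
    ∀ {E : Set (EuclideanSpace ℝ (Fin n))}, IsOpen E →
    μ (orect a b) < 2 ^ m * μ (E ∩ orect a b) → orect a b ⊆ (halo μ)^[(k+1) * m] E := by
  induction m with
  | zero =>
    intro E hE h
    exact absurd h (not_lt.2 (by simpa using measure_mono inter_subset_right))
  | succ m ih =>
    intro E hE h
    rcases key hpos hnull hΔ hd hk hE hab with h1 | h1
    · refine (rect_sub_halo hpos hE.measurableSet hab h1).trans ?_
      exact iter_mono hpos hE (show 1 ≤ (k+1) * (m+1) by nlinarith)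
    · have := ih (isOpen_iter hpos hE (k+1)) (h.trans_le (by
        rw [pow_succ, mul_assoc]; gcongr))
      rwa [← Function.iterate_add_apply, ← Nat.mul_succ] at this

lemma halo_poly {μ : Measure (EuclideanSpace ℝ (Fin n))} [IsLocallyFiniteMeasure μ]
    (hpos : ∀ a b : Fin n → ℝ, (∀ i, a i < b i) → 0 < μ (orect a b))
    (hnull : ∀ (i : Fin n) (c : ℝ), μ {x | x i = c} = 0)
    {Δ : ℝ} (hΔ : 1 < Δ) (hd : DoublingWrt μ {R | IsAxisRect R} Δ)
    {c : ℝ} (hc : ∀ E : Set (EuclideanSpace ℝ (Fin n)), MeasurableSet E →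
        μ {x | (1 / 2 : ℝ≥0∞) < maxOp μ {R | IsAxisRect R} (E.indicator 1) x}
          ≤ ENNReal.ofReal c * μ E) :
    ∃ q : ℕ, ∀ (m : ℕ) (E : Set (EuclideanSpace ℝ (Fin n))), MeasurableSet E →
      μ {x | ((2:ℝ≥0∞) ^ m)⁻¹ < maxOp μ {R | IsAxisRect R} (E.indicator 1) x}
        ≤ 2 ^ (q * m) * μ E := by
  obtain ⟨k, hk⟩ := pow_unbounded_of_one_lt Δ (show (1:ℝ) < 3/2 by norm_num)
  obtain ⟨d, hdd⟩ := pow_unbounded_of_one_lt c (show (1:ℝ) < 2 by norm_num)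
  have hc2 : ENNReal.ofReal c ≤ 2 ^ d := by
    refine (ENNReal.ofReal_le_ofReal hdd.le).trans ?_
    rw [ENNReal.ofReal_pow (by norm_num)]; simp
  have hit : ∀ (j : ℕ) (E : Set (EuclideanSpace ℝ (Fin n))), IsOpen E →
      μ ((halo μ)^[j] E) ≤ 2 ^ (d * j) * μ E := by
    intro j E hE
    induction j with
    | zero => simp
    | succ j ih =>
      rw [Function.iterate_succ_apply']
      refine (hc _ (isOpen_iter hpos hE j).measurableSet).trans ?_
      calc _ ≤ 2 ^ d * (2 ^ (d * j) * μ E) := mul_le_mul' hc2 ih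
        _ = _ := by rw [← mul_assoc, ← pow_add]; ring_nf
  refine ⟨d * (k+1), fun m E hE => ?_⟩
  have hopen : ∀ U, IsOpen U → E ⊆ U →
      μ {x | ((2:ℝ≥0∞) ^ m)⁻¹ < maxOp μ {R | IsAxisRect R} (E.indicator 1) x}
        ≤ 2 ^ (d * (k+1) * m) * μ U := by
    intro U hU hEU
    rw [mul_assoc]
    refine (measure_mono ?_).trans (hit ((k+1)*m) U hU)
    intro x hx
    obtain ⟨a, b, hab, hxm, h⟩ := (lt_maxOp_ind_iff hpos hE x _).1 hx
    refine iter_cover hpos hnull hΔ hd hk hab m hU ?_ hxm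
    refine lt_of_lt_of_le ?_ (mul_le_mul_right
      (measure_mono (inter_subset_inter_left (orect a b) hEU)) ((2:ℝ≥0∞)^m))
    rw [mul_comm, ← div_eq_mul_inv, ENNReal.div_lt_iff (by simp) (by simp)] at h
    rwa [mul_comm]
  rw [mul_comm, ← ENNReal.div_le_iff_le_mul (by simp) (by simp)]
  refine le_of_forall_gt fun r hr => ?_
  obtain ⟨U, hEU, hU, hUr⟩ := E.exists_isOpen_lt_of_lt r hr
  refine lt_of_le_of_lt ?_ hUr
  rw [ENNReal.div_le_iff_le_mul (by simp) (by simp), mul_comm]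
  exact hopen U hU hEU

end TB
namespace TB
variable {n : ℕ}

lemma pow_le_sum (p : ℕ) (hp : p ≠ 0) (x : ℝ≥0∞) :
    x ^ p ≤ ∑' i : ℤ, if (2:ℝ≥0∞) ^ i < x then ((2:ℝ≥0∞) ^ (i+1)) ^ p else 0 := by
  by_cases h0 : x = 0
  · simp [h0, hp]
  by_cases ht : x = ⊤
  · subst ht
    have hlt : ∀ i : ℤ, (2:ℝ≥0∞) ^ i < ⊤ := fun i => ENNReal.zpow_lt_top (by simp) (by simp) i
    simp only [hlt, if_true]
    have h1 : (∑' _ : ℕ, (1:ℝ≥0∞)) = ⊤ := ENNReal.tsum_const_eq_top_of_ne_zero one_ne_zero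
    have h2 : (∑' i : ℕ, ((2:ℝ≥0∞) ^ ((i:ℤ)+1)) ^ p) ≤ ∑' i : ℤ, ((2:ℝ≥0∞) ^ (i+1)) ^ p :=
      ENNReal.tsum_comp_le_tsum_of_injective (f := fun i : ℕ => (i:ℤ)) Nat.cast_injective
        (fun i : ℤ => ((2:ℝ≥0∞) ^ (i+1)) ^ p)
    have h3 : (∑' _ : ℕ, (1:ℝ≥0∞)) ≤ ∑' i : ℕ, ((2:ℝ≥0∞) ^ ((i:ℤ)+1)) ^ p := by
      refine ENNReal.tsum_le_tsum fun i => one_le_pow₀ ?_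
      have : ((2:ℝ≥0∞) ^ ((i:ℤ)+1)) = 2 ^ (i+1) := by
        rw [← zpow_natCast]; norm_cast
      rw [this]
      exact one_le_pow₀ (by norm_num)
    rw [h1] at h3
    rw [top_le_iff.1 (h3.trans h2)]
    exact le_top
  · obtain ⟨i, hi⟩ := ENNReal.exists_mem_Ioc_zpow h0 ht (y := 2) (by norm_num) (by simp)
    refine le_trans ?_ (ENNReal.le_tsum i)
    rw [if_pos hi.1]
    exact pow_le_pow_left' hi.2 p

lemma two_zpow_add (i j : ℤ) : (2:ℝ≥0∞) ^ (i + j) = 2 ^ i * 2 ^ j :=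
  ENNReal.zpow_add (by simp) (by simp) i j

lemma two_zpow_pow (j : ℤ) (p : ℕ) : ((2:ℝ≥0∞) ^ j) ^ p = 2 ^ (j * p) := by
  induction p with
  | zero => simp
  | succ p ih => rw [pow_succ, ih, ← two_zpow_add]; congr 1; push_cast; ring

lemma ind_eq {α : Type*} (s : Set α) (x : α) (c : ℝ≥0∞) (P : Prop) [Decidable P]
    (h : x ∈ s ↔ P) : (if P then c else 0) = s.indicator (fun _ => c) x := by
  by_cases hP : P
  · rw [if_pos hP, Set.indicator_of_mem (h.2 hP)]
  · rw [if_neg hP, Set.indicator_of_notMem (fun h' => hP (h.1 h'))]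

lemma tsum_geo : (∑' m : ℕ, ((2:ℝ≥0∞) ^ m)⁻¹) = 2 := by
  simp_rw [ENNReal.inv_pow]
  exact ENNReal.tsum_geometric_two

lemma sum_le_pow (p : ℕ) (hp : p ≠ 0) (y : ℝ≥0∞) (hy : y ≠ ⊤) :
    (∑' j : ℤ, if (2:ℝ≥0∞) ^ j < y then ((2:ℝ≥0∞) ^ j) ^ p else 0) ≤ 2 * y ^ p := by
  by_cases h0 : y = 0
  · simp [h0]
  obtain ⟨J, hJ1, hJ2⟩ := ENNReal.exists_mem_Ioc_zpow h0 hy (y := 2) (by norm_num) (by simp)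
  have hinj : Function.Injective (fun l : ℕ => J - (l:ℤ)) := fun a b h => by
    have h' : J - (a:ℤ) = J - (b:ℤ) := h
    omega
  rw [← hinj.tsum_eq]
  · calc _ ≤ ∑' l : ℕ, ((2:ℝ≥0∞) ^ l)⁻¹ * y ^ p := by
          refine ENNReal.tsum_le_tsum fun l => ?_
          split_ifs
          · rw [sub_eq_add_neg, two_zpow_add, mul_pow, mul_comm, ENNReal.zpow_neg, zpow_natCast]
            refine mul_le_mul' ?_ (pow_le_pow_left' hJ1.le p)
            refine pow_le_of_le_one zero_le ?_ hp
            rw [ENNReal.inv_le_one]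
            exact one_le_pow₀ (by norm_num)
          · exact zero_le
      _ = 2 * y ^ p := by rw [ENNReal.tsum_mul_right, tsum_geo]
  · intro j hj
    have hlt : (2:ℝ≥0∞) ^ j < y := by
      by_contra h
      exact hj (if_neg h)
    have : j ≤ J := by
      by_contra h
      have h2 : (2:ℝ≥0∞) ^ (J+1) ≤ 2 ^ j := ENNReal.zpow_le_of_le (by norm_num) (by omega)
      exact absurd (hlt.trans_le (hJ2.trans h2)) (lt_irrefl _)
    exact ⟨(J - j).toNat, by show J - _ = j; omega⟩

lemma le_levels (i : ℤ) (y : ℝ≥0∞) (hy : y ≠ ⊤) :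
    y ≤ 2 ^ (i-1) + ∑' m : ℕ, if (2:ℝ≥0∞) ^ (i + m - 1) < y then (2:ℝ≥0∞) ^ (i + m) else 0 := by
  by_cases h : y ≤ 2 ^ (i-1)
  · exact h.trans le_self_add
  push Not at h
  obtain ⟨J, hJ1, hJ2⟩ := ENNReal.exists_mem_Ioc_zpow (ne_bot_of_gt h) hy (y := 2)
    (by norm_num) (by simp)
  have : i - 1 ≤ J := by
    by_contra h'
    have h2 : (2:ℝ≥0∞) ^ (J+1) ≤ 2 ^ (i-1) := ENNReal.zpow_le_of_le (by norm_num) (by omega)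
    exact absurd (h.trans_le (hJ2.trans h2)) (lt_irrefl _)
  obtain ⟨m, rfl⟩ : ∃ m : ℕ, J = i + m - 1 := ⟨(J - i + 1).toNat, by omega⟩
  refine le_trans ?_ (le_trans (ENNReal.le_tsum m) le_add_self)
  rw [if_pos hJ1]
  simpa using hJ2

def lev (f : EuclideanSpace ℝ (Fin n) → ℝ) (j : ℤ) : Set (EuclideanSpace ℝ (Fin n)) :=
  {y | (2:ℝ≥0∞) ^ j < ENNReal.ofReal |f y|}

lemma meas_g {f : EuclideanSpace ℝ (Fin n) → ℝ} (hf : Measurable f) :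
    Measurable fun y => ENNReal.ofReal |f y| :=
  ENNReal.measurable_ofReal.comp (continuous_abs.measurable.comp hf)

lemma meas_lev {f : EuclideanSpace ℝ (Fin n) → ℝ} (hf : Measurable f) (j : ℤ) :
    MeasurableSet (lev f j) := measurableSet_lt measurable_const (meas_g hf)

lemma level_sub {μ : Measure (EuclideanSpace ℝ (Fin n))} [IsLocallyFiniteMeasure μ]
    (hpos : ∀ a b : Fin n → ℝ, (∀ i, a i < b i) → 0 < μ (orect a b))
    {f : EuclideanSpace ℝ (Fin n) → ℝ} (hf : Measurable f) (i : ℤ) :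
    {x | (2:ℝ≥0∞) ^ i < maxOp μ {R | IsAxisRect R} f x} ⊆
      ⋃ m : ℕ, {x | ((2:ℝ≥0∞) ^ (2 * m + 2))⁻¹ <
        maxOp μ {R | IsAxisRect R} ((lev f (i + m - 1)).indicator 1) x} := by
  intro x hx
  obtain ⟨a, b, hab, hxm, h⟩ := (lt_maxOp_iff hpos f x _).1 hx
  by_contra hcon
  simp only [mem_iUnion, not_exists] at hcon
  have hm : ∀ m : ℕ, μ (lev f (i + m - 1) ∩ orect a b) ≤
      ((2:ℝ≥0∞) ^ (2 * m + 2))⁻¹ * μ (orect a b) := by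
    intro m
    by_contra hh
    exact hcon m ((lt_maxOp_ind_iff hpos (meas_lev hf _) x _).2 ⟨a, b, hab, hxm, not_le.1 hh⟩)
  refine absurd h (not_lt.2 ?_)
  have hi2 : (2:ℝ≥0∞) ^ (i-1) + 2 ^ (i-1) = 2 ^ i := by
    rw [← two_mul, mul_comm]
    have := two_zpow_add (i-1) 1
    rw [zpow_one, sub_add_cancel] at this
    exact this.symm
  calc ∫⁻ y in orect a b, ENNReal.ofReal |f y| ∂μ
      ≤ ∫⁻ y in orect a b, (2 ^ (i-1) + ∑' m : ℕ,
          (lev f (i + m - 1)).indicator (fun _ => (2:ℝ≥0∞) ^ (i + m)) y) ∂μ := by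
        refine lintegral_mono fun y => ?_
        refine (le_levels i _ ENNReal.ofReal_ne_top).trans (add_le_add le_rfl
          (ENNReal.tsum_le_tsum fun m => (ind_eq (lev f (i + m - 1)) y _
            ((2:ℝ≥0∞) ^ (i + m - 1) < ENNReal.ofReal |f y|) Iff.rfl).le))
    _ = 2 ^ (i-1) * μ (orect a b) +
          ∑' m : ℕ, (2:ℝ≥0∞) ^ (i + m) * μ (lev f (i + m - 1) ∩ orect a b) := by
        rw [lintegral_add_left measurable_const, lintegral_const, Measure.restrict_apply_univ,
          lintegral_tsum fun m => (measurable_const.indicator (meas_lev hf _)).aemeasurable]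
        congr 2
        ext m
        rw [lintegral_indicator_const (meas_lev hf _), Measure.restrict_apply (meas_lev hf _)]
    _ ≤ 2 ^ (i-1) * μ (orect a b) + ∑' m : ℕ, ((2:ℝ≥0∞) ^ m)⁻¹ *
          (2 ^ (i-1) * 2⁻¹ * μ (orect a b)) := by
        refine add_le_add le_rfl (ENNReal.tsum_le_tsum fun m => ?_)
        refine (mul_le_mul_right (hm m) _).trans (le_of_eq ?_)
        have e : (2:ℝ≥0∞) ^ (i + m) * ((2:ℝ≥0∞) ^ (2 * m + 2))⁻¹
            = ((2:ℝ≥0∞) ^ m)⁻¹ * (2 ^ (i-1) * 2⁻¹) := by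
          simp only [← zpow_natCast, ← ENNReal.zpow_neg]
          rw [← zpow_neg_one, ← two_zpow_add, ← two_zpow_add, ← two_zpow_add]
          congr 1
          push_cast; ring
        rw [← mul_assoc, e]; ring
    _ = 2 ^ i * μ (orect a b) := by
        rw [ENNReal.tsum_mul_right, tsum_geo, ← hi2, add_mul]
        congr 1
        rw [mul_comm (2 ^ (i-1)) (2⁻¹ : ℝ≥0∞), mul_assoc, ← mul_assoc,
          ENNReal.mul_inv_cancel (by simp) (by simp), one_mul]

lemma strong {μ : Measure (EuclideanSpace ℝ (Fin n))} [IsLocallyFiniteMeasure μ]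
    (hpos : ∀ a b : Fin n → ℝ, (∀ i, a i < b i) → 0 < μ (orect a b))
    {q : ℕ} (hq : ∀ (m : ℕ) (E : Set (EuclideanSpace ℝ (Fin n))), MeasurableSet E →
      μ {x | ((2:ℝ≥0∞) ^ m)⁻¹ < maxOp μ {R | IsAxisRect R} (E.indicator 1) x}
        ≤ 2 ^ (q * m) * μ E)
    {f : EuclideanSpace ℝ (Fin n) → ℝ} (hf : Measurable f) :
    ∫⁻ x, maxOp μ {R | IsAxisRect R} f x ^ (2*q+2) ∂μ ≤
      2 ^ (2 * (2*q+2) + 2 * q + 2) * ∫⁻ x, ENNReal.ofReal |f x| ^ (2*q+2) ∂μ := by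
  set p := 2*q+2 with hp
  have hp0 : p ≠ 0 := by omega
  have hlev : ∀ i : ℤ, μ {x | (2:ℝ≥0∞) ^ i < maxOp μ {R | IsAxisRect R} f x} ≤
      ∑' m : ℕ, 2 ^ (q * (2*m+2)) * μ (lev f (i + m - 1)) := fun i =>
    (measure_mono (level_sub hpos hf i)).trans ((measure_iUnion_le _).trans
      (ENNReal.tsum_le_tsum fun m => hq _ _ (meas_lev hf _)))
  have hA : ∫⁻ x, maxOp μ {R | IsAxisRect R} f x ^ p ∂μ ≤
      ∑' i : ℤ, ((2:ℝ≥0∞) ^ (i+1)) ^ p *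
        μ {x | (2:ℝ≥0∞) ^ i < maxOp μ {R | IsAxisRect R} f x} := by
    have hms : ∀ i : ℤ, MeasurableSet {x | (2:ℝ≥0∞) ^ i < maxOp μ {R | IsAxisRect R} f x} :=
      fun i => (isOpen_lt_maxOp hpos f _).measurableSet
    calc _ ≤ ∫⁻ x, ∑' i : ℤ, {x | (2:ℝ≥0∞) ^ i < maxOp μ {R | IsAxisRect R} f x}.indicator
          (fun _ => ((2:ℝ≥0∞) ^ (i+1)) ^ p) x ∂μ :=
          lintegral_mono fun x => (pow_le_sum p hp0 _).trans
            (ENNReal.tsum_le_tsum fun i => (ind_eq _ x _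
              ((2:ℝ≥0∞) ^ i < maxOp μ {R | IsAxisRect R} f x) Iff.rfl).le)
      _ = _ := by
        rw [lintegral_tsum fun i => (measurable_const.indicator (hms i)).aemeasurable]
        congr 1
        ext i
        rw [lintegral_indicator_const (hms i)]
  have hB : (∑' j : ℤ, ((2:ℝ≥0∞) ^ j) ^ p * μ (lev f j)) ≤
      2 * ∫⁻ x, ENNReal.ofReal |f x| ^ p ∂μ := by
    rw [← lintegral_const_mul _ ((meas_g hf).pow_const p)]
    calc _ = ∫⁻ x, ∑' j : ℤ, (lev f j).indicator (fun _ => ((2:ℝ≥0∞) ^ j) ^ p) x ∂μ := by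
          rw [lintegral_tsum fun i => (measurable_const.indicator (meas_lev hf i)).aemeasurable]
          congr 1
          ext i
          rw [lintegral_indicator_const (meas_lev hf i)]
      _ ≤ _ := lintegral_mono fun x => le_trans
            (ENNReal.tsum_le_tsum fun j => (ind_eq (lev f j) x _
              ((2:ℝ≥0∞) ^ j < ENNReal.ofReal |f x|) Iff.rfl).ge)
            (sum_le_pow p hp0 _ ENNReal.ofReal_ne_top)
  refine hA.trans ?_
  calc _ ≤ ∑' i : ℤ, ∑' m : ℕ, ((2:ℝ≥0∞) ^ (i+1)) ^ p *
            (2 ^ (q * (2*m+2)) * μ (lev f (i + m - 1))) := by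
          refine ENNReal.tsum_le_tsum fun i => ?_
          rw [ENNReal.tsum_mul_left]
          exact mul_le_mul_right (hlev i) _
    _ = ∑' m : ℕ, ∑' i : ℤ, ((2:ℝ≥0∞) ^ (i+1)) ^ p *
            (2 ^ (q * (2*m+2)) * μ (lev f (i + m - 1))) := ENNReal.tsum_comm
    _ = ∑' m : ℕ, ∑' j : ℤ, ((2:ℝ≥0∞) ^ (j + (1 - m) + 1)) ^ p *
            (2 ^ (q * (2*m+2)) * μ (lev f j)) := by
          congr 1
          ext m
          rw [← (Equiv.addRight (1 - (m:ℤ))).tsum_eq]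
          congr 1
          ext j
          simp only [Equiv.coe_addRight]
          congr 4
          ring
    _ ≤ ∑' m : ℕ, ((2:ℝ≥0∞) ^ m)⁻¹ * (2 ^ (2 * p + 2 * q) *
            ∑' j : ℤ, ((2:ℝ≥0∞) ^ j) ^ p * μ (lev f j)) := by
          refine ENNReal.tsum_le_tsum fun m => ?_
          rw [← mul_assoc, ← ENNReal.tsum_mul_left]
          refine ENNReal.tsum_le_tsum fun j => ?_
          rw [← mul_assoc, ← mul_assoc]
          gcongr ?_ * _
          rw [two_zpow_pow, two_zpow_pow]
          simp only [← zpow_natCast, ← ENNReal.zpow_neg]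
          rw [← two_zpow_add, ← two_zpow_add, ← two_zpow_add]
          refine ENNReal.zpow_le_of_le (by norm_num) ?_
          rw [hp]
          push_cast
          nlinarith
    _ = 2 * (2 ^ (2 * p + 2 * q) * ∑' j : ℤ, ((2:ℝ≥0∞) ^ j) ^ p * μ (lev f j)) := by
          rw [ENNReal.tsum_mul_right, tsum_geo]
    _ ≤ 2 * (2 ^ (2 * p + 2 * q) * (2 * ∫⁻ x, ENNReal.ofReal |f x| ^ p ∂μ)) := by gcongr
    _ = _ := by ring

end TB

/-- For a nonzero locally finite Borel measure `μ` on `ℝⁿ`, doubling with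
respect to the collection `𝔑` of all axis-parallel open rectangles, the Tauberian
condition at level `1/2` for `M_{𝔑,μ}` (with respect to `μ`) holds if and only if
`M_{𝔑,μ}` is bounded on `L^p(μ)` for some `p > 1`. -/
theorem statement0 (n : ℕ) (μ : Measure (EuclideanSpace ℝ (Fin n)))
    (hloc : IsLocallyFiniteMeasure μ) (hμ : μ ≠ 0)
    (hdbl : ∃ Δ : ℝ, 1 < Δ ∧ DoublingWrt μ {R | IsAxisRect R} Δ) :
    (∃ c : ℝ, 0 < c ∧ ∀ E : Set (EuclideanSpace ℝ (Fin n)), MeasurableSet E →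
        μ {x | (1 / 2 : ℝ≥0∞) < maxOp μ {R | IsAxisRect R} (E.indicator 1) x}
          ≤ ENNReal.ofReal c * μ E)
    ↔ (∃ p : ℝ, 1 < p ∧ BoundedOnLp μ μ {R | IsAxisRect R} p) := by
  obtain ⟨Δ, hΔ, hd⟩ := hdbl
  have hpos : ∀ a b : Fin n → ℝ, (∀ i, a i < b i) → 0 < μ (TB.orect a b) :=
    fun a b hab => TB.orect_pos hμ hd hab
  have hnull := TB.hyper_null hd
  constructor
  · rintro ⟨c, -, hc⟩
    obtain ⟨q, hq⟩ := TB.halo_poly hpos hnull hΔ hd hc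
    refine ⟨((2 * q + 2 : ℕ) : ℝ), ?_, 2 ^ (2 * (2*q+2) + 2 * q + 2), by simp, fun f hf => ?_⟩
    · push_cast
      have : (0:ℝ) ≤ q := Nat.cast_nonneg q
      linarith
    · simp only [ENNReal.rpow_natCast]
      exact TB.strong hpos hq hf
  · rintro ⟨p, hp, C, hC, hb⟩
    have hp0 : 0 < p := by linarith
    have h2 : ((2:ℝ≥0∞) ^ p * C) ≠ ⊤ :=
      ENNReal.mul_ne_top (ENNReal.rpow_ne_top_of_nonneg hp0.le (by simp)) hC
    refine ⟨((2:ℝ≥0∞) ^ p * C).toReal + 1, by positivity, fun E hE => ?_⟩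
    have hle : (2:ℝ≥0∞) ^ p * C ≤ ENNReal.ofReal (((2:ℝ≥0∞) ^ p * C).toReal + 1) := by
      rw [← ENNReal.ofReal_toReal h2]
      exact ENNReal.ofReal_le_ofReal (by simp)
    have h3 := hb (E.indicator 1) (measurable_one.indicator hE)
    have h4 : ∫⁻ x, ENNReal.ofReal |E.indicator (1 : EuclideanSpace ℝ (Fin n) → ℝ) x| ^ p ∂μ
        = μ E := by
      rw [← lintegral_indicator_one hE]
      congr 1
      ext x
      by_cases h : x ∈ E <;> simp [h, hp0]
    rw [h4] at h3
    have hms : MeasurableSet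
        {x | (1 / 2 : ℝ≥0∞) < maxOp μ {R | IsAxisRect R} (E.indicator 1) x} :=
      (TB.isOpen_lt_maxOp hpos _ _).measurableSet
    have h5 : (1 / 2 : ℝ≥0∞) ^ p *
        μ {x | (1 / 2 : ℝ≥0∞) < maxOp μ {R | IsAxisRect R} (E.indicator 1) x} ≤ C * μ E := by
      refine le_trans ?_ h3
      rw [← lintegral_indicator_const hms]
      refine lintegral_mono fun x => ?_
      by_cases hx : x ∈ {x | (1 / 2 : ℝ≥0∞) < maxOp μ {R | IsAxisRect R} (E.indicator 1) x}
      · rw [Set.indicator_of_mem hx]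
        exact ENNReal.rpow_le_rpow (le_of_lt hx) hp0.le
      · rw [Set.indicator_of_notMem hx]
        exact zero_le
    calc _ = 2 ^ p * ((1 / 2 : ℝ≥0∞) ^ p *
          μ {x | (1 / 2 : ℝ≥0∞) < maxOp μ {R | IsAxisRect R} (E.indicator 1) x}) := by
          rw [← mul_assoc, ← ENNReal.mul_rpow_of_nonneg _ _ hp0.le, one_div,
            ENNReal.mul_inv_cancel (by simp) (by simp), ENNReal.one_rpow, one_mul]
      _ ≤ 2 ^ p * (C * μ E) := by gcongr
      _ = 2 ^ p * C * μ E := by rw [mul_assoc]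
      _ ≤ _ := by gcongr
end

section
/- Let 𝔅 be a homothecy invariant basis of nonempty bounded open convex subsets of ℝⁿ, and let μ, ν be locally finite nonnegative Borel measures on ℝⁿ, with μ nonzero and doubling with respect to 𝔅. Then the following are equivalent: (i) there exist γ ∈ (0,1) and c > 0 such that ν({x ∈ ℝⁿ : M_{𝔅,μ}(1_E)(x) > γ}) ≤ c·ν(E) for every Borel set E ⊆ ℝⁿ; (ii) there exists p₀ > 1 such that M_{𝔅,μ} is bounded on L^p(ν) for every p > p₀. -/
open MeasureTheory Set Filter
open scoped ENNReal Topology Pointwise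

abbrev Eu (n : ℕ) := EuclideanSpace ℝ (Fin n)

/-- Homothety of ratio `s` and centre `c`, applied to a set. -/
def hm {n : ℕ} (c : Eu n) (s : ℝ) (B : Set (Eu n)) : Set (Eu n) := ((1 - s) • c) +ᵥ s • B

lemma mem_cp {n : ℕ} {a : Eu n} {s : ℝ} {B : Set (Eu n)} {y : Eu n} :
    y ∈ a +ᵥ s • B ↔ ∃ b ∈ B, a + s • b = y := by
  simp only [mem_vadd_set, mem_smul_set, vadd_eq_add]
  constructor
  · rintro ⟨_, ⟨b, hb, rfl⟩, rfl⟩; exact ⟨b, hb, rfl⟩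
  · rintro ⟨b, hb, rfl⟩; exact ⟨_, ⟨b, hb, rfl⟩, rfl⟩

lemma mem_hm {n : ℕ} {c : Eu n} {s : ℝ} {B : Set (Eu n)} {y : Eu n} :
    y ∈ hm c s B ↔ ∃ b ∈ B, (1 - s) • c + s • b = y := mem_cp

lemma self_mem_hm {n : ℕ} {c : Eu n} {s : ℝ} {B : Set (Eu n)} (hc : c ∈ B) : c ∈ hm c s B :=
  mem_hm.2 ⟨c, hc, by module⟩

lemma cp_mem {n : ℕ} {𝔅 : Set (Set (Eu n))} (hhom : HomothecyInvariant 𝔅) {B : Set (Eu n)}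
    (h : B ∈ 𝔅) (a : Eu n) {s : ℝ} (hs : 0 < s) : a +ᵥ s • B ∈ 𝔅 :=
  (hhom _ ((hhom _ h).2 s hs)).1 a

lemma hm_mem {n : ℕ} {𝔅 : Set (Set (Eu n))} (hhom : HomothecyInvariant 𝔅) {B : Set (Eu n)}
    (h : B ∈ 𝔅) (a : Eu n) {s : ℝ} (hs : 0 < s) : hm a s B ∈ 𝔅 := cp_mem hhom h _ hs

lemma comb {n : ℕ} {S : Set (Eu n)} (hS : Convex ℝ S) {a b : ℝ} (ha : 0 ≤ a) (hb : 0 ≤ b)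
    {u v : Eu n} (hu : u ∈ S) (hv : v ∈ S) : ∃ w ∈ S, a • u + b • v = (a + b) • w := by
  have : a • u + b • v ∈ (a + b) • S := by
    rw [hS.add_smul ha hb]
    exact add_mem_add (smul_mem_smul_set hu) (smul_mem_smul_set hv)
  obtain ⟨w, hw, h⟩ := mem_smul_set.1 this
  exact ⟨w, hw, h.symm⟩

lemma sum_comb {n : ℕ} {S : Set (Eu n)} (hS : Convex ℝ S) (hne : S.Nonempty)
    (J : Finset S) : ∃ w ∈ S, ∑ i ∈ J, (i : Eu n) = (J.card : ℝ) • w := by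
  classical
  induction J using Finset.induction_on with
  | empty => obtain ⟨w, hw⟩ := hne; exact ⟨w, hw, by simp⟩
  | insert a J ha ih =>
    obtain ⟨w, hw, h⟩ := ih
    obtain ⟨z, hz, h'⟩ := comb hS zero_le_one (Nat.cast_nonneg J.card) a.2 hw
    refine ⟨z, hz, ?_⟩
    rw [Finset.sum_insert ha, h, Finset.card_insert_of_notMem ha]
    push_cast
    rw [add_comm (J.card : ℝ) 1, ← h', one_smul]

/-- Minkowski's asymmetry bound, via Helly's theorem. -/
lemma exists_center {n : ℕ} {B : Set (Eu n)} (hB : IsConvexBasisSet B) :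
    ∃ c ∈ B, ∀ x ∈ B, ∃ y ∈ closure B, ((n : ℝ) + 1) • c = x + (n : ℝ) • y := by
  classical
  obtain ⟨hne, hbd, hop, hcv⟩ := hB
  have hn : (0 : ℝ) < (n : ℝ) + 1 := by positivity
  let g : Eu n → Eu n → Eu n := fun x y => ((n : ℝ) + 1)⁻¹ • (x + (n : ℝ) • y)
  let F : B → Set (Eu n) := fun x => g x '' closure B
  have hcomp : IsCompact (closure B) := hbd.isCompact_closure
  have hg : ∀ x : Eu n, Continuous (g x) := by intro x; fun_prop
  have hF : (⋂ i, F i).Nonempty := by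
    apply Convex.helly_theorem_compact' (𝕜 := ℝ)
    · rintro x _ ⟨y, hy, rfl⟩ _ ⟨z, hz, rfl⟩ a b ha hb hab
      refine ⟨a • y + b • z, hcv.closure hy hz ha hb hab, ?_⟩
      have : a = 1 - b := by linarith
      subst this
      simp only [g]
      module
    · intro x; exact hcomp.image (hg x)
    · intro I hI
      rw [finrank_euclideanSpace_fin] at hI
      obtain ⟨s, hs⟩ := hne
      have hI' : (I.card : ℝ) ≤ n + 1 := by exact_mod_cast hI
      refine ⟨((n : ℝ) + 1)⁻¹ • (∑ i ∈ I, (i : Eu n) + ((n : ℝ) + 1 - I.card) • s), ?_⟩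
      simp only [mem_iInter]
      intro j hj
      obtain ⟨w, hw, hw'⟩ := sum_comb hcv ⟨s, hs⟩ (I.erase j)
      obtain ⟨z, hz, hz'⟩ := comb hcv (Nat.cast_nonneg (I.erase j).card)
        (sub_nonneg.2 hI') hw hs
      refine ⟨z, subset_closure hz, ?_⟩
      simp only [g]
      congr 1
      rw [← Finset.add_sum_erase _ _ hj, hw', add_assoc, hz']
      congr 2
      have := Finset.card_erase_add_one hj
      have h2 : ((I.erase j).card : ℝ) + 1 = I.card := by exact_mod_cast this
      linarith
  obtain ⟨c, hc⟩ := hF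
  simp only [mem_iInter] at hc
  have key : ∀ x ∈ B, ∃ y ∈ closure B, ((n : ℝ) + 1) • c = x + (n : ℝ) • y := by
    intro x hx
    obtain ⟨y, hy, h⟩ := hc ⟨x, hx⟩
    refine ⟨y, hy, ?_⟩
    rw [← h]
    simp only [g]
    rw [smul_inv_smul₀ hn.ne']
  refine ⟨c, ?_, key⟩
  obtain ⟨x, hx⟩ := hne
  obtain ⟨y, hy, h⟩ := hc ⟨x, hx⟩
  have h3 : (((n : ℝ) + 1)⁻¹) • x + ((n : ℝ) / ((n : ℝ) + 1)) • y ∈ interior B := by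
    apply hcv.combo_interior_closure_mem_interior _ hy
    · positivity
    · positivity
    · field_simp; ring
    · rwa [hop.interior_eq]
  rw [hop.interior_eq] at h3
  rw [← h]
  convert h3 using 1
  simp only [g]
  rw [smul_add, smul_smul]
  congr 2
  field_simp

lemma enlarge {n : ℕ} {B : Set (Eu n)} (hB : IsConvexBasisSet B) :
    ∃ c ∈ B, ∀ (a b : Eu n) (r s : ℝ), 0 < r → 0 < s → r ≤ 2 * s →
      ((a +ᵥ r • B) ∩ (b +ᵥ s • B)).Nonempty →
      closure (a +ᵥ r • B) ⊆ hm (b + s • c) (2 ^ (n + 2)) (b +ᵥ s • B) := by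
  obtain ⟨c, hcB, hc⟩ := exists_center hB
  obtain ⟨hne, hbd, hop, hcv⟩ := hB
  refine ⟨c, hcB, ?_⟩
  rintro a b r s hr hs hrs ⟨p, hpa, hpb⟩ z hz
  obtain ⟨u, hu, rfl⟩ := mem_cp.1 hpa
  obtain ⟨v, hv, huv⟩ := mem_cp.1 hpb
  have hz' : ∃ w ∈ closure B, a + r • w = z := by
    have e : a +ᵥ r • B = (fun w => a + r • w) '' B := by
      ext y; rw [mem_cp]; rfl
    rw [e] at hz
    have hcl : IsClosed ((fun w => a + r • w) '' closure B) :=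
      (hbd.isCompact_closure.image (by fun_prop)).isClosed
    exact closure_minimal (image_mono subset_closure) hcl hz
  obtain ⟨w, hw, rfl⟩ := hz'
  obtain ⟨y, hy, hy'⟩ := hc u hu
  set K : ℝ := 2 ^ (n + 2) with hK
  have hK3 : (3 : ℝ) + 2 * n ≤ K := by
    have : ∀ m : ℕ, 3 + 2 * m ≤ 2 ^ (m + 2) := by
      intro m
      induction m with
      | zero => norm_num
      | succ m ih => rw [pow_succ]; omega
    rw [hK]; exact_mod_cast this n
  have hn0 : (0 : ℝ) ≤ n := Nat.cast_nonneg n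
  have hK1 : 1 < K := by linarith
  have hK0 : 0 < K := by linarith
  set ρ : ℝ := r / s with hρ
  have hρ0 : 0 < ρ := by positivity
  have hρ2 : ρ ≤ 2 := by rw [hρ, div_le_iff₀ hs]; exact hrs
  have hr' : r = ρ * s := by rw [hρ]; field_simp
  have hcl := hcv.closure
  obtain ⟨w1, hw1, e1⟩ := comb hcl hρ0.le (mul_nonneg hρ0.le hn0) hw hy
  have hs1 : 0 ≤ K - 1 - (ρ + ρ * n) := by nlinarith
  obtain ⟨w2, hw2, e2⟩ := comb hcl (a := ρ + ρ * n) (by positivity) hs1 hw1 (subset_closure hcB)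
  have e2' : (ρ + ρ * n) • w1 + (K - 1 - (ρ + ρ * n)) • c = (K - 1) • w2 := by
    rw [e2]; congr 1; ring
  have hq : K⁻¹ • v + ((K - 1) / K) • w2 ∈ interior B := by
    apply hcv.combo_interior_closure_mem_interior _ hw2
    · positivity
    · apply div_nonneg <;> linarith
    · field_simp; ring
    · rwa [hop.interior_eq]
  rw [hop.interior_eq] at hq
  rw [mem_hm]
  refine ⟨_, mem_cp.2 ⟨_, hq, rfl⟩, ?_⟩
  have e3 : ((K - 1) / K) • w2 = K⁻¹ • ((K - 1) • w2) := by
    rw [smul_smul]; congr 1; field_simp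
  have hu' : u = ((n : ℝ) + 1) • c - (n : ℝ) • y := by rw [hy']; abel
  have ha : a = b + s • v - r • u := by rw [huv]; abel
  rw [e3, ← e2', ← e1, ha, hu', hr']
  match_scalars <;> field_simp <;> ring

section Meas

variable {n : ℕ} {𝔅 : Set (Set (Eu n))} {μ ν : Measure (Eu n)} {Δ : ℝ}

lemma hm_hm {c : Eu n} {s t : ℝ} {B : Set (Eu n)} : hm c s (hm c t B) = hm c (s * t) B := by
  ext y
  constructor
  · intro h
    obtain ⟨z, hz, rfl⟩ := mem_hm.1 h
    obtain ⟨b, hb, rfl⟩ := mem_hm.1 hz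
    exact mem_hm.2 ⟨b, hb, by module⟩
  · intro h
    obtain ⟨b, hb, rfl⟩ := mem_hm.1 h
    exact mem_hm.2 ⟨_, mem_hm.2 ⟨b, hb, rfl⟩, by module⟩

lemma hm_two {c : Eu n} {B : Set (Eu n)} (hcv : Convex ℝ B) (hc : c ∈ B) :
    B ⊆ hm c 2 B := by
  intro b hb
  refine mem_hm.2 ⟨(1 / 2 : ℝ) • c + (1 / 2 : ℝ) • b,
    hcv hc hb (by norm_num) (by norm_num) (by norm_num), ?_⟩
  module

lemma hm_subset {x : Eu n} {t : ℝ} {B : Set (Eu n)} (hcv : Convex ℝ B) (hx : x ∈ B)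
    (ht0 : 0 < t) (ht1 : t ≤ 1) : hm x t B ⊆ B := by
  intro y hy
  obtain ⟨b, hb, rfl⟩ := mem_hm.1 hy
  exact hcv hx hb (by linarith) ht0.le (by ring)

lemma dbl_pow (hB : ∀ B ∈ 𝔅, IsConvexBasisSet B) (hhom : HomothecyInvariant 𝔅)
    (hd : DoublingWrt μ 𝔅 Δ) {B : Set (Eu n)} (h : B ∈ 𝔅) {c : Eu n} (hc : c ∈ B) (k : ℕ) :
    μ (hm c (2 ^ k) B) ≤ ENNReal.ofReal Δ ^ k * μ B := by
  induction k with
  | zero =>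
    have : hm c (2 ^ 0) B = B := by
      ext y; rw [mem_hm]; simp
    rw [this]; simp
  | succ k ih =>
    have hD : hm c (2 ^ k) B ∈ 𝔅 := hm_mem hhom h c (by positivity)
    have h1 := hd _ hD ((1 - (2 : ℝ)) • c) (hm_two (hB _ hD).2.2.2 (self_mem_hm hc))
    have h2 : (((1 - (2 : ℝ)) • c) +ᵥ (2 : ℝ) • hm c (2 ^ k) B) = hm c (2 ^ (k + 1)) B := by
      rw [pow_succ', ← hm_hm]; rfl
    rw [h2] at h1
    calc _ ≤ _ := h1
      _ ≤ ENNReal.ofReal Δ * (ENNReal.ofReal Δ ^ k * μ B) := by gcongr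
      _ = _ := by ring

lemma pos_B (hB : ∀ B ∈ 𝔅, IsConvexBasisSet B) (hhom : HomothecyInvariant 𝔅)
    (hd : DoublingWrt μ 𝔅 Δ) (hμ : μ ≠ 0) {B : Set (Eu n)} (h : B ∈ 𝔅) : 0 < μ B := by
  rw [pos_iff_ne_zero]
  intro h0
  apply hμ
  obtain ⟨⟨c, hc⟩, hbd, hop, hcv⟩ := hB B h
  rw [← Measure.measure_univ_eq_zero]
  have : (univ : Set (Eu n)) ⊆ ⋃ k : ℕ, hm c (2 ^ k) B := by
    intro y _
    have ht : Tendsto (fun k : ℕ => c + ((1 / 2 : ℝ) ^ k) • (y - c)) atTop (𝓝 (c + (0 : ℝ) • (y - c))) := by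
      refine tendsto_const_nhds.add (Tendsto.smul_const ?_ _)
      exact tendsto_pow_atTop_nhds_zero_of_lt_one (by norm_num) (by norm_num)
    have hev := ht.eventually (hop.mem_nhds (by simpa using hc))
    obtain ⟨k, hk⟩ := hev.exists
    refine mem_iUnion.2 ⟨k, mem_hm.2 ⟨_, hk, ?_⟩⟩
    have e : (2 : ℝ) ^ k * (1 / 2) ^ k = 1 := by rw [← mul_pow]; norm_num
    have : (2 : ℝ) ^ k • (1 / 2 : ℝ) ^ k • (y - c) = y - c := by rw [smul_smul, e, one_smul]
    rw [smul_add, this]; module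
  refine measure_mono_null this (measure_iUnion_null fun k => ?_)
  have := dbl_pow hB hhom hd h hc k
  simpa [h0] using this

lemma fin_B [IsLocallyFiniteMeasure μ] (hB : ∀ B ∈ 𝔅, IsConvexBasisSet B)
    {B : Set (Eu n)} (h : B ∈ 𝔅) : μ B < ⊤ :=
  (measure_mono subset_closure).trans_lt (hB B h).2.1.isCompact_closure.measure_lt_top

lemma vitali (hB : ∀ B ∈ 𝔅, IsConvexBasisSet B) (hhom : HomothecyInvariant 𝔅)
    (hd : DoublingWrt μ 𝔅 Δ) {B : Set (Eu n)} (h : B ∈ 𝔅) {ι : Type*} (a : ι → Eu n) (r : ι → ℝ)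
    (hr : ∀ i, 0 < r i) (hr1 : ∀ i, r i ≤ 1) :
    ∃ u : Set ι, u.Countable ∧ u.PairwiseDisjoint (fun i => a i +ᵥ r i • B) ∧
      μ (⋃ i, closure (a i +ᵥ r i • B)) ≤
        ENNReal.ofReal Δ ^ (n + 2) * μ (⋃ i ∈ u, a i +ᵥ r i • B) := by
  have hm' : ∀ i, a i +ᵥ r i • B ∈ 𝔅 := fun i => cp_mem hhom h _ (hr i)
  obtain ⟨u, -, hdis, hu⟩ := Vitali.exists_disjoint_subfamily_covering_enlargement
    (fun i => a i +ᵥ r i • B) univ r 2 one_lt_two (fun i _ => (hr i).le) 1 (fun i _ => hr1 i)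
    (fun i _ => (hB _ (hm' i)).1)
  have hcount : u.Countable := hdis.countable_of_isOpen (fun i _ => (hB _ (hm' i)).2.2.1)
    (fun i _ => (hB _ (hm' i)).1)
  refine ⟨u, hcount, hdis, ?_⟩
  obtain ⟨c, hc, hen⟩ := enlarge (hB B h)
  have hsub : (⋃ i, closure (a i +ᵥ r i • B)) ⊆
      ⋃ i ∈ u, hm (a i + r i • c) (2 ^ (n + 2)) (a i +ᵥ r i • B) := by
    refine iUnion_subset fun i => ?_
    obtain ⟨j, hj, hne, hij⟩ := hu i (mem_univ i)
    exact (hen _ _ _ _ (hr i) (hr j) hij hne).trans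
      (subset_biUnion_of_mem (u := fun i => hm (a i + r i • c) (2 ^ (n + 2)) (a i +ᵥ r i • B)) hj)
  rw [measure_biUnion hcount hdis (fun i _ => (hB _ (hm' i)).2.2.1.measurableSet),
    ← ENNReal.tsum_mul_left]
  refine (measure_mono hsub).trans ((measure_biUnion_le μ hcount _).trans ?_)
  refine ENNReal.tsum_le_tsum fun i => ?_
  exact dbl_pow hB hhom hd (hm' i) (mem_cp.2 ⟨c, hc, rfl⟩) _

lemma frontier_null [IsLocallyFiniteMeasure μ] (hB : ∀ B ∈ 𝔅, IsConvexBasisSet B)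
    (hhom : HomothecyInvariant 𝔅)
    (hd : DoublingWrt μ 𝔅 Δ) {B : Set (Eu n)} (h : B ∈ 𝔅) : μ (frontier B) = 0 := by
  obtain ⟨⟨b0, hb0⟩, hbd, hop, hcv⟩ := hB B h
  obtain ⟨R, hR0, hR⟩ : ∃ R : ℝ, 0 < R ∧ ∀ x ∈ closure B, ∀ y ∈ closure B, dist x y ≤ R := by
    refine ⟨Metric.diam (closure B) + 1, by positivity, fun x hx y hy => ?_⟩
    have := Metric.dist_le_diam_of_mem hbd.closure hx hy
    linarith
  set r : ℕ → ℝ := fun k => 1 / ((k : ℝ) + 1) with hrdef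
  have hr0 : ∀ k, 0 < r k := fun k => by simp only [hrdef]; positivity
  have hr1 : ∀ k, r k ≤ 1 := fun k => by
    simp only [hrdef]; rw [div_le_one (by positivity)]; linarith [(Nat.cast_nonneg k : (0:ℝ) ≤ k)]
  have hranti : Antitone r := fun i j hij => by
    simp only [hrdef]
    have : (i : ℝ) ≤ j := by exact_mod_cast hij
    gcongr
  set A : ℕ → Set (Eu n) := fun k => B ∩ Metric.cthickening (R * r k) (frontier B) with hA
  have hbound : ∀ k, μ (frontier B) ≤ ENNReal.ofReal Δ ^ (n + 2) * μ (A k) := by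
    intro k
    obtain ⟨u, hu, hdis, hle⟩ := vitali hB hhom hd h
      (fun y : frontier B => (1 - r k) • (y : Eu n)) (fun _ => r k) (fun _ => hr0 k) (fun _ => hr1 k)
    refine (measure_mono ?_).trans (hle.trans ?_)
    · intro y hy
      refine mem_iUnion.2 ⟨⟨y, hy⟩, ?_⟩
      have hy' : y ∈ closure B := frontier_subset_closure hy
      have hcont : Continuous (fun b : Eu n => (1 - r k) • y + r k • b) := by fun_prop
      have := image_closure_subset_closure_image hcont (s := B) ⟨y, hy', rfl⟩
      have e : (fun b : Eu n => (1 - r k) • y + r k • b) '' B = ((1 - r k) • y) +ᵥ r k • B := by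
        ext z; rw [mem_cp]; rfl
      rw [e] at this
      convert this using 1
      module
    · gcongr
      refine iUnion₂_subset fun y _ z hz => ?_
      obtain ⟨b, hb, rfl⟩ := mem_cp.1 hz
      have hy' : (y : Eu n) ∈ closure B := frontier_subset_closure y.2
      refine ⟨?_, ?_⟩
      · apply interior_subset
        apply hcv.combo_closure_interior_mem_interior hy' _ (by linarith [hr1 k]) (hr0 k) (by ring)
        rwa [hop.interior_eq]
      · apply Metric.mem_cthickening_of_dist_le _ (y : Eu n) _ _ y.2
        have : (1 - r k) • (y : Eu n) + r k • b = y + r k • (b - y) := by module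
        rw [this, dist_eq_norm, add_sub_cancel_left, norm_smul, Real.norm_of_nonneg (hr0 k).le,
          ← dist_eq_norm, mul_comm]
        have := hR b (subset_closure hb) y hy'
        have := (hr0 k).le
        gcongr
  have hlim : Tendsto (fun k => μ (A k)) atTop (𝓝 (μ (⋂ k, A k))) := by
    apply tendsto_measure_iInter_atTop
    · intro k
      exact (hop.measurableSet.inter Metric.isClosed_cthickening.measurableSet).nullMeasurableSet
    · intro i j hij
      exact inter_subset_inter_right _ (Metric.cthickening_mono (by gcongr; exact hranti hij) _)
    · exact ⟨0, ((measure_mono inter_subset_left).trans_lt (fin_B hB h)).ne⟩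
  have hemp : (⋂ k, A k) = ∅ := by
    rw [eq_empty_iff_forall_notMem]
    intro x hx
    rw [mem_iInter] at hx
    have hxB := (hx 0).1
    have hrl : Tendsto (fun k => ENNReal.ofReal (R * r k)) atTop (𝓝 (ENNReal.ofReal (R * 0))) :=
      ENNReal.tendsto_ofReal (tendsto_one_div_add_atTop_nhds_zero_nat.const_mul R)
    have hle : Metric.infEDist x (frontier B) ≤ ENNReal.ofReal (R * 0) :=
      ge_of_tendsto' hrl fun k => Metric.mem_cthickening_iff.1 (hx k).2
    have hz : Metric.infEDist x (frontier B) = 0 := by simpa using hle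
    have : x ∈ frontier B := by
      rw [← isClosed_frontier.closure_eq]; exact Metric.mem_closure_iff_infEDist_zero.2 hz
    rw [hop.frontier_eq] at this
    exact this.2 hxB
  rw [hemp, measure_empty] at hlim
  have hlim2 := ENNReal.Tendsto.const_mul (a := ENNReal.ofReal Δ ^ (n + 2)) hlim
    (Or.inr (ENNReal.pow_ne_top ENNReal.ofReal_ne_top))
  rw [mul_zero] at hlim2
  exact le_antisymm (ge_of_tendsto' hlim2 hbound) (zero_le)

lemma cont_meas [IsLocallyFiniteMeasure μ] (hB : ∀ B ∈ 𝔅, IsConvexBasisSet B)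
    (hhom : HomothecyInvariant 𝔅)
    (hd : DoublingWrt μ 𝔅 Δ) {B : Set (Eu n)} (h : B ∈ 𝔅) {x : Eu n} (hx : x ∈ B)
    {A : Set (Eu n)} (hA : MeasurableSet A) {ε : ℝ} (hε : 0 < ε) :
    ContinuousOn (fun t : ℝ => μ.real (A ∩ hm x t B)) (Icc ε 1) := by
  intro t0 ht0
  have ht00 : 0 < t0 := hε.trans_le ht0.1
  have hfin : μ (A ∩ hm x t0 B) ≠ ⊤ :=
    ((measure_mono inter_subset_right).trans_lt (fin_B hB (hm_mem hhom h x ht00))).ne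
  refine (ENNReal.tendsto_toReal hfin).comp ?_
  have hmemiff : ∀ (t : ℝ), 0 < t → ∀ y, (y ∈ hm x t B ↔ x + t⁻¹ • (y - x) ∈ B) := by
    intro t ht y
    rw [mem_hm]
    constructor
    · rintro ⟨b, hb, rfl⟩
      convert hb using 1
      match_scalars <;> field_simp <;> ring
    · intro hy
      refine ⟨_, hy, ?_⟩
      match_scalars <;> field_simp <;> ring
  let S : ℝ → Set (Eu n) := fun t => A ∩ {y | x + t⁻¹ • (y - x) ∈ B}
  have hop := (hB B h).2.2.1
  have hSm : ∀ t, MeasurableSet (S t) := fun t =>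
    hA.inter (hop.preimage (by fun_prop : Continuous fun y : Eu n => x + t⁻¹ • (y - x))).measurableSet
  have hSe : ∀ t, 0 < t → A ∩ hm x t B = S t := by
    intro t ht; ext y; simp only [S, mem_inter_iff, hmemiff t ht y, mem_ofPred_eq]
  have hev : ∀ᶠ t in 𝓝[Icc ε 1] t0, t ∈ Icc ε 1 := self_mem_nhdsWithin
  have main : Tendsto (fun t => μ (S t)) (𝓝[Icc ε 1] t0) (𝓝 (μ (S t0))) := by
    apply tendsto_measure_of_ae_tendsto_indicator (B := B) _ (hSm t0) hSm hop.measurableSet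
      (fin_B hB h).ne
    · filter_upwards [hev] with t ht
      rw [← hSe t (hε.trans_le ht.1)]
      exact inter_subset_right.trans (hm_subset (hB B h).2.2.2 hx (hε.trans_le ht.1) ht.2)
    · have hfr := frontier_null (μ := μ) hB hhom hd (hm_mem hhom h x ht00)
      have hae : ∀ᵐ y ∂μ, y ∉ frontier (hm x t0 B) := measure_eq_zero_iff_ae_notMem.1 hfr
      filter_upwards [hae] with y hy
      have hct : Tendsto (fun t : ℝ => x + t⁻¹ • (y - x)) (𝓝[Icc ε 1] t0)
          (𝓝 (x + t0⁻¹ • (y - x))) := by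
        refine tendsto_const_nhds.add (Tendsto.smul_const ?_ _)
        exact (tendsto_inv₀ ht00.ne').mono_left nhdsWithin_le_nhds
      by_cases hyB : x + t0⁻¹ • (y - x) ∈ B
      · filter_upwards [hct.eventually (hop.mem_nhds hyB)] with t ht
        have ht' : x + t⁻¹ • (y - x) ∈ B := ht
        simp only [S, mem_inter_iff, mem_ofPred_eq, ht', hyB]
      · have hyc : x + t0⁻¹ • (y - x) ∉ closure B := by
          intro hcl
          apply hy
          rw [(hB _ (hm_mem hhom h x ht00)).2.2.1.frontier_eq]
          refine ⟨?_, fun hh => hyB ((hmemiff t0 ht00 y).1 hh)⟩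
          have hcont : Continuous (fun b : Eu n => (1 - t0) • x + t0 • b) := by fun_prop
          have := image_closure_subset_closure_image hcont (s := B) ⟨_, hcl, rfl⟩
          have e : (fun b : Eu n => (1 - t0) • x + t0 • b) '' B = hm x t0 B := by
            ext z; rw [mem_hm]; rfl
          rw [e] at this
          convert this using 1
          match_scalars <;> field_simp <;> ring
        filter_upwards [hct.eventually (isClosed_closure.isOpen_compl.mem_nhds hyc)] with t ht
        have ht' : x + t⁻¹ • (y - x) ∉ B := fun hh => ht (subset_closure hh)
        simp only [S, mem_inter_iff, mem_ofPred_eq, ht', hyB]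
  rw [hSe t0 ht00]
  refine main.congr' ?_
  filter_upwards [hev] with t ht
  rw [hSe t (hε.trans_le ht.1)]

lemma lint_ind {E B : Set (Eu n)} (hE : MeasurableSet E) :
    ∫⁻ y in B, ENNReal.ofReal |E.indicator (1 : Eu n → ℝ) y| ∂μ = μ (E ∩ B) := by
  have : (fun y => ENNReal.ofReal |E.indicator (1 : Eu n → ℝ) y|) = E.indicator 1 := by
    ext y
    by_cases hy : y ∈ E <;> simp [hy]
  rw [this, lintegral_indicator_one hE, Measure.restrict_apply hE]

lemma lt_maxOp_iff {f : Eu n → ℝ} {x : Eu n} {l : ℝ≥0∞} : l < maxOp μ 𝔅 f x ↔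
    ∃ B ∈ 𝔅, x ∈ B ∧ 0 < μ B ∧ l < (∫⁻ y in B, ENNReal.ofReal |f y| ∂μ) / μ B := by
  simp only [maxOp, lt_iSup_iff, exists_prop]

/-- The halo set. -/
def Hl (μ : Measure (Eu n)) (𝔅 : Set (Set (Eu n))) (l : ℝ≥0∞) (E : Set (Eu n)) : Set (Eu n) :=
  {x | l < maxOp μ 𝔅 (E.indicator 1) x}

lemma isOpen_lt_maxOp (hB : ∀ B ∈ 𝔅, IsConvexBasisSet B) (f : Eu n → ℝ) (l : ℝ≥0∞) :
    IsOpen {x | l < maxOp μ 𝔅 f x} := by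
  rw [isOpen_iff_mem_nhds]
  intro x hx
  obtain ⟨B, h, hxB, hp, hl⟩ := lt_maxOp_iff.1 hx
  filter_upwards [(hB B h).2.2.1.mem_nhds hxB] with y hy
  exact lt_maxOp_iff.2 ⟨B, h, hy, hp, hl⟩

lemma mem_Hl [IsLocallyFiniteMeasure μ] (hB : ∀ B ∈ 𝔅, IsConvexBasisSet B)
    {l : ℝ≥0∞} {E : Set (Eu n)} (hE : MeasurableSet E) {x : Eu n} :
    x ∈ Hl μ 𝔅 l E ↔ ∃ B ∈ 𝔅, x ∈ B ∧ 0 < μ B ∧ l * μ B < μ (E ∩ B) := by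
  rw [Hl, mem_ofPred_eq, lt_maxOp_iff]
  refine exists_congr fun B => and_congr_right fun h => and_congr_right fun hx =>
    and_congr_right fun hp => ?_
  rw [lint_ind hE, ENNReal.lt_div_iff_mul_lt (Or.inl hp.ne') (Or.inl (fin_B hB h).ne)]

lemma exists_small (hB : ∀ B ∈ 𝔅, IsConvexBasisSet B) {B : Set (Eu n)} (h : B ∈ 𝔅)
    {E : Set (Eu n)} (hE : IsOpen E) {x : Eu n} (hx : x ∈ E) :
    ∃ ε : ℝ, 0 < ε ∧ ε < 1 ∧ hm x ε B ⊆ E := by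
  obtain ⟨ρ, hρ, hball⟩ := Metric.isOpen_iff.1 hE x hx
  obtain ⟨R, hR⟩ := (hB B h).2.1.subset_ball x
  have hR0 : 0 < |R| + 1 := by positivity
  refine ⟨min (1 / 2) (ρ / (|R| + 1)), by positivity, ?_, ?_⟩
  · exact (min_le_left _ _).trans_lt (by norm_num)
  intro y hy
  obtain ⟨b, hb, rfl⟩ := mem_hm.1 hy
  apply hball
  set ε := min (1 / 2) (ρ / (|R| + 1)) with hε
  have hε0 : 0 < ε := by positivity
  have hb' : dist b x < |R| + 1 := by
    have h1 : dist b x < R := hR hb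
    have := le_abs_self R
    linarith
  have e : (1 - ε) • x + ε • b = x + ε • (b - x) := by module
  rw [Metric.mem_ball, e, dist_eq_norm, add_sub_cancel_left, norm_smul,
    Real.norm_of_nonneg hε0.le, ← dist_eq_norm]
  calc ε * dist b x < ε * (|R| + 1) := by gcongr
    _ ≤ ρ / (|R| + 1) * (|R| + 1) := by gcongr; exact min_le_right _ _
    _ = ρ := by field_simp

lemma subset_Hl [IsLocallyFiniteMeasure μ] (hB : ∀ B ∈ 𝔅, IsConvexBasisSet B)
    (hhom : HomothecyInvariant 𝔅)
    (hd : DoublingWrt μ 𝔅 Δ) (hμ : μ ≠ 0) {B : Set (Eu n)} (h : B ∈ 𝔅)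
    {l : ℝ≥0∞} (hl : l < 1) {E : Set (Eu n)} (hE : IsOpen E) : E ⊆ Hl μ 𝔅 l E := by
  intro x hx
  obtain ⟨z, hz⟩ := (hB B h).1
  have h' : (x - z) +ᵥ B ∈ 𝔅 := (hhom B h).1 _
  have hx' : x ∈ (x - z) +ᵥ B := mem_vadd_set.2 ⟨z, hz, by simp⟩
  obtain ⟨ε, h0, -, hs⟩ := exists_small hB h' hE hx
  have hm' := hm_mem hhom h' x h0
  have hp := pos_B hB hhom hd hμ hm'
  refine (mem_Hl hB hE.measurableSet).2 ⟨_, hm', self_mem_hm hx', hp, ?_⟩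
  rw [inter_eq_right.2 hs]
  calc l * _ < 1 * _ := (ENNReal.mul_lt_mul_iff_left hp.ne' (fin_B hB hm').ne).2 hl
    _ = _ := one_mul _

lemma growth [IsLocallyFiniteMeasure μ] (hB : ∀ B ∈ 𝔅, IsConvexBasisSet B)
    (hhom : HomothecyInvariant 𝔅) (hΔ : 1 < Δ)
    (hd : DoublingWrt μ 𝔅 Δ) (hμ : μ ≠ 0) {B : Set (Eu n)} (h : B ∈ 𝔅)
    {γ : ℝ} (hγ : γ ∈ Ioo (0 : ℝ) 1) {E : Set (Eu n)} (hE : IsOpen E)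
    (hle : μ.real (E ∩ B) ≤ γ * μ.real B) :
    (1 + (1 - γ) / 2 / Δ ^ (n + 2)) * μ.real (E ∩ B) ≤
      μ.real (Hl μ 𝔅 (ENNReal.ofReal γ) E ∩ B) := by
  have hBfin := fin_B (μ := μ) hB h
  set γ' := (1 + γ) / 2 with hγ'
  have hγ1 : γ < γ' := by rw [hγ']; linarith [hγ.2]
  have hγ2 : γ' < 1 := by rw [hγ']; linarith [hγ.2]
  have hγ0 : 0 < γ' := hγ.1.trans hγ1
  have hcv := (hB B h).2.2.2
  have hrpos : ∀ S ∈ 𝔅, 0 < μ.real S := fun S hS =>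
    ENNReal.toReal_pos (pos_B hB hhom hd hμ hS).ne' (fin_B hB hS).ne
  -- choose the good radius
  have hex : ∀ x : (E ∩ B : Set (Eu n)), ∃ t : ℝ, 0 < t ∧ t ≤ 1 ∧
      μ.real (E ∩ hm (x : Eu n) t B) = γ' * μ.real (hm (x : Eu n) t B) := by
    rintro ⟨x, hxE, hxB⟩
    obtain ⟨ε, h0, h1, hs⟩ := exists_small hB h hE hxE
    have c1 := cont_meas hB hhom hd h hxB hE.measurableSet h0
    have c2 := cont_meas hB hhom hd h hxB MeasurableSet.univ h0
    have hc : ContinuousOn (fun t : ℝ => μ.real (E ∩ hm x t B) -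
        γ' * μ.real (univ ∩ hm x t B)) (Icc ε 1) := c1.sub (continuousOn_const.mul c2)
    have hone : hm x 1 B = B := by ext y; rw [mem_hm]; simp
    have hiv := intermediate_value_Icc' h1.le hc
    have hmem : (0 : ℝ) ∈ Icc (μ.real (E ∩ hm x 1 B) - γ' * μ.real (univ ∩ hm x 1 B))
        (μ.real (E ∩ hm x ε B) - γ' * μ.real (univ ∩ hm x ε B)) := by
      rw [hone, univ_inter, univ_inter, inter_eq_right.2 hs]
      have p1 := hrpos _ h
      have p2 := hrpos _ (hm_mem hhom h x h0)
      constructor <;> nlinarith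
    obtain ⟨t, ht, hte⟩ := hiv hmem
    refine ⟨t, h0.trans_le ht.1, ht.2, ?_⟩
    simp only [univ_inter] at hte
    linarith
  choose t ht0 ht1 hte using hex
  obtain ⟨u, hu, hdis, hvit⟩ := vitali hB hhom hd h
    (fun x : (E ∩ B : Set (Eu n)) => (1 - t x) • (x : Eu n)) t ht0 ht1
  change u.PairwiseDisjoint (fun i : (E ∩ B : Set (Eu n)) => hm (i : Eu n) (t i) B) at hdis
  change μ (⋃ i : (E ∩ B : Set (Eu n)), closure (hm (i : Eu n) (t i) B)) ≤
    ENNReal.ofReal Δ ^ (n + 2) * μ (⋃ i ∈ u, hm (Subtype.val i) (t i) B) at hvit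
  set W := ⋃ i ∈ u, hm (Subtype.val i) (t i) B with hW
  have hmm : ∀ i : (E ∩ B : Set (Eu n)), hm (i : Eu n) (t i) B ∈ 𝔅 :=
    fun i => hm_mem hhom h _ (ht0 i)
  have hmeas : ∀ i : (E ∩ B : Set (Eu n)), MeasurableSet (hm (i : Eu n) (t i) B) :=
    fun i => (hB _ (hmm i)).2.2.1.measurableSet
  have hWB : W ⊆ B := iUnion₂_subset fun i _ => hm_subset hcv i.2.2 (ht0 i) (ht1 i)
  have hteE : ∀ i : (E ∩ B : Set (Eu n)), μ (E ∩ hm (i : Eu n) (t i) B) =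
      ENNReal.ofReal γ' * μ (hm (i : Eu n) (t i) B) := by
    intro i
    have hf := (fin_B (μ := μ) hB (hmm i)).ne
    have hf' : μ (E ∩ hm (i : Eu n) (t i) B) ≠ ⊤ :=
      ((measure_mono inter_subset_right).trans_lt (fin_B hB (hmm i))).ne
    rw [← ENNReal.ofReal_toReal hf', ← ENNReal.ofReal_toReal hf, ← ENNReal.ofReal_mul hγ0.le]
    exact congrArg _ (hte i)
  have hWH : W ⊆ Hl μ 𝔅 (ENNReal.ofReal γ) E := by
    refine iUnion₂_subset fun i _ y hy => ?_
    have hp := pos_B hB hhom hd hμ (hmm i)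
    refine (mem_Hl hB hE.measurableSet).2 ⟨_, hmm i, hy, hp, ?_⟩
    rw [hteE i]
    exact (ENNReal.mul_lt_mul_iff_left hp.ne' (fin_B hB (hmm i)).ne).2
      ((ENNReal.ofReal_lt_ofReal_iff hγ0).2 hγ1)
  have hWm : MeasurableSet W := MeasurableSet.biUnion hu fun i _ => hmeas i
  have hWE : μ (E ∩ W) = ENNReal.ofReal γ' * μ W := by
    rw [hW, inter_iUnion₂, measure_biUnion hu (hdis.mono fun i => inter_subset_right)
      (fun i _ => hE.measurableSet.inter (hmeas i)), measure_biUnion hu hdis (fun i _ => hmeas i),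
      ← ENNReal.tsum_mul_left]
    exact tsum_congr fun i => hteE i
  have hWE' : μ.real (E ∩ W) = γ' * μ.real W := by
    rw [measureReal_def, hWE, ENNReal.toReal_mul, ENNReal.toReal_ofReal hγ0.le, measureReal_def]
  have hWfin : μ W ≠ ⊤ := ((measure_mono hWB).trans_lt hBfin).ne
  have hcov : μ.real (E ∩ B) ≤ Δ ^ (n + 2) * μ.real W := by
    have h1 : μ (E ∩ B) ≤ ENNReal.ofReal Δ ^ (n + 2) * μ W := by
      refine (measure_mono ?_).trans hvit
      intro x hx
      exact mem_iUnion.2 ⟨⟨x, hx⟩, subset_closure (self_mem_hm hx.2)⟩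
    have h2 := ENNReal.toReal_mono (ENNReal.mul_ne_top
      (ENNReal.pow_ne_top ENNReal.ofReal_ne_top) hWfin) h1
    rwa [ENNReal.toReal_mul, ENNReal.toReal_pow, ENNReal.toReal_ofReal (by linarith)] at h2
  have hEH := subset_Hl (μ := μ) hB hhom hd hμ h
    (l := ENNReal.ofReal γ) (by rw [ENNReal.ofReal_lt_one]; exact hγ.2) hE
  have hsum : μ.real (E ∩ B) + μ.real (W \ E) ≤ μ.real (Hl μ 𝔅 (ENNReal.ofReal γ) E ∩ B) := by
    rw [← measureReal_union (disjoint_sdiff_right.mono_left inter_subset_left)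
      (hWm.diff hE.measurableSet) ((measure_mono inter_subset_right).trans_lt hBfin).ne
      ((measure_mono sdiff_subset).trans_lt hWfin.lt_top).ne]
    refine measureReal_mono ?_ ((measure_mono inter_subset_right).trans_lt hBfin).ne
    refine union_subset (inter_subset_inter_left _ hEH) ?_
    exact fun y hy => ⟨hWH hy.1, hWB hy.1⟩
  have hdiff : μ.real (W \ E) = (1 - γ') * μ.real W := by
    have := measureReal_inter_add_sdiff (μ := μ) (s := W) hE.measurableSet hWfin
    rw [inter_comm, hWE'] at this
    linarith
  have hD : 0 < Δ ^ (n + 2) := by positivity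
  have : (1 - γ) / 2 / Δ ^ (n + 2) * μ.real (E ∩ B) ≤ μ.real (W \ E) := by
    rw [hdiff]
    have e : 1 - γ' = (1 - γ) / 2 := by rw [hγ']; ring
    rw [e, div_mul_eq_mul_div, div_le_iff₀ hD]
    have : 0 ≤ (1 - γ) / 2 := by linarith [hγ.2]
    nlinarith
  linarith

lemma isOpen_Hl (hB : ∀ B ∈ 𝔅, IsConvexBasisSet B) (l : ℝ≥0∞) (E : Set (Eu n)) :
    IsOpen (Hl μ 𝔅 l E) := isOpen_lt_maxOp hB _ _

lemma subset_iter [IsLocallyFiniteMeasure μ] (hB : ∀ B ∈ 𝔅, IsConvexBasisSet B)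
    (hhom : HomothecyInvariant 𝔅)
    (hd : DoublingWrt μ 𝔅 Δ) (hμ : μ ≠ 0) {B : Set (Eu n)} (h : B ∈ 𝔅)
    {l : ℝ≥0∞} (hl : l < 1) (k : ℕ) : ∀ {E : Set (Eu n)}, IsOpen E → E ⊆ (Hl μ 𝔅 l)^[k] E := by
  induction k with
  | zero => intro E _; exact Subset.rfl
  | succ k ih =>
    intro E hE
    rw [Function.iterate_succ_apply]
    exact (subset_Hl hB hhom hd hμ h hl hE).trans (ih (isOpen_Hl hB _ _))

lemma iter_cover [IsLocallyFiniteMeasure μ] (hB : ∀ B ∈ 𝔅, IsConvexBasisSet B)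
    (hhom : HomothecyInvariant 𝔅) (hΔ : 1 < Δ)
    (hd : DoublingWrt μ 𝔅 Δ) (hμ : μ ≠ 0) {B : Set (Eu n)} (h : B ∈ 𝔅)
    {γ : ℝ} (hγ : γ ∈ Ioo (0 : ℝ) 1) (k : ℕ) : ∀ (l : ℝ) {E : Set (Eu n)}, IsOpen E →
    l * μ.real B < μ.real (E ∩ B) → 1 ≤ (1 + (1 - γ) / 2 / Δ ^ (n + 2)) ^ k * l →
    B ⊆ (Hl μ 𝔅 (ENNReal.ofReal γ))^[k + 1] E := by
  have hBfin := fin_B (μ := μ) hB h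
  have hBpos := pos_B (μ := μ) hB hhom hd hμ h
  have hrpos : 0 < μ.real B := ENNReal.toReal_pos hBpos.ne' hBfin.ne
  have hγl : ENNReal.ofReal γ < 1 := by rw [ENNReal.ofReal_lt_one]; exact hγ.2
  have hbig : ∀ E : Set (Eu n), IsOpen E → γ * μ.real B < μ.real (E ∩ B) →
      B ⊆ Hl μ 𝔅 (ENNReal.ofReal γ) E := by
    intro E hE hlt x hx
    refine (mem_Hl hB hE.measurableSet).2 ⟨B, h, hx, hBpos, ?_⟩
    have hf' : μ (E ∩ B) ≠ ⊤ := ((measure_mono inter_subset_right).trans_lt hBfin).ne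
    rw [← ENNReal.ofReal_toReal hf', ← ENNReal.ofReal_toReal hBfin.ne,
      ← ENNReal.ofReal_mul hγ.1.le]
    exact (ENNReal.ofReal_lt_ofReal_iff (lt_of_le_of_lt (by have := hγ.1; positivity) hlt)).2 hlt
  induction k with
  | zero =>
    intro l E hE hlt hl
    simp only [pow_zero, one_mul] at hl
    apply hbig E hE
    have := hγ.2
    nlinarith
  | succ k ih =>
    intro l E hE hlt hl
    rw [Function.iterate_succ_apply]
    rcases lt_or_ge (γ * μ.real B) (μ.real (E ∩ B)) with hc | hc
    · exact (hbig E hE hc).trans (subset_iter hB hhom hd hμ h hγl _ (isOpen_Hl hB _ _))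
    · have hg := growth hB hhom hΔ hd hμ h hγ hE hc
      set q := (1 + (1 - γ) / 2 / Δ ^ (n + 2)) with hq
      have hq0 : 0 < q := by
        have := hγ.2
        have : 0 < (1 - γ) / 2 / Δ ^ (n + 2) := by
          apply div_pos (by linarith); positivity
        linarith
      apply ih (q * l) (isOpen_Hl hB _ _)
      · refine lt_of_lt_of_le ?_ hg
        rw [mul_assoc]
        gcongr
      · rw [pow_succ, mul_assoc] at hl; exact hl

lemma nu_iter (hB : ∀ B ∈ 𝔅, IsConvexBasisSet B) {γ c : ℝ}
    (hT : TauberianCond μ ν 𝔅 γ c) (k : ℕ) : ∀ {E : Set (Eu n)}, IsOpen E →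
    ν ((Hl μ 𝔅 (ENNReal.ofReal γ))^[k] E) ≤ ENNReal.ofReal c ^ k * ν E := by
  induction k with
  | zero => intro E _; simp
  | succ k ih =>
    intro E hE
    rw [Function.iterate_succ_apply]
    refine (ih (isOpen_Hl hB _ _)).trans ?_
    rw [pow_succ, mul_assoc]
    gcongr
    exact hT E hE.measurableSet

lemma weak [IsLocallyFiniteMeasure μ] [IsLocallyFiniteMeasure ν]
    (hB : ∀ B ∈ 𝔅, IsConvexBasisSet B)
    (hhom : HomothecyInvariant 𝔅) (hΔ : 1 < Δ)
    (hd : DoublingWrt μ 𝔅 Δ) (hμ : μ ≠ 0)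
    {γ : ℝ} (hγ : γ ∈ Ioo (0 : ℝ) 1) {c : ℝ} (hT : TauberianCond μ ν 𝔅 γ c) :
    ∃ A D : ℝ≥0∞, A ≠ ⊤ ∧ D ≠ ⊤ ∧ ∀ E : Set (Eu n), MeasurableSet E → ∀ i : ℕ,
      ν (Hl μ 𝔅 ((4 : ℝ≥0∞)⁻¹ ^ (i + 1)) E) ≤ A * D ^ i * ν E := by
  set q := (1 + (1 - γ) / 2 / Δ ^ (n + 2)) with hq
  have hq1 : 1 < q := by
    have := hγ.2
    have : 0 < (1 - γ) / 2 / Δ ^ (n + 2) := by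
      apply div_pos (by linarith); positivity
    linarith
  obtain ⟨m, hm4⟩ := pow_unbounded_of_one_lt 4 hq1
  refine ⟨ENNReal.ofReal c ^ (m + 1), ENNReal.ofReal c ^ m,
    ENNReal.pow_ne_top ENNReal.ofReal_ne_top, ENNReal.pow_ne_top ENNReal.ofReal_ne_top, ?_⟩
  intro E hE i
  have hexp : ENNReal.ofReal c ^ (m + 1) * (ENNReal.ofReal c ^ m) ^ i =
      ENNReal.ofReal c ^ (m * (i + 1) + 1) := by
    rw [← pow_mul, ← pow_add]; congr 1; ring
  rw [hexp]
  set Q := ENNReal.ofReal c ^ (m * (i + 1) + 1) with hQ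
  have hopen : ∀ U : Set (Eu n), IsOpen U → E ⊆ U →
      ν (Hl μ 𝔅 ((4 : ℝ≥0∞)⁻¹ ^ (i + 1)) E) ≤ Q * ν U := by
    intro U hU hEU
    refine (measure_mono ?_).trans (nu_iter hB hT (m * (i + 1) + 1) hU)
    intro x hx
    obtain ⟨B, h, hxB, hp, hlt⟩ := (mem_Hl hB hE).1 hx
    have hBfin := fin_B (μ := μ) hB h
    have hf' : μ (U ∩ B) ≠ ⊤ := ((measure_mono inter_subset_right).trans_lt hBfin).ne
    have hlt' : (4 : ℝ≥0∞)⁻¹ ^ (i + 1) * μ B < μ (U ∩ B) :=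
      hlt.trans_le (measure_mono (inter_subset_inter_left _ hEU))
    have hr := ENNReal.toReal_strict_mono hf' hlt'
    rw [ENNReal.toReal_mul, ENNReal.toReal_pow, ENNReal.toReal_inv] at hr
    refine iter_cover hB hhom hΔ hd hμ h hγ (m * (i + 1)) (((4 : ℝ≥0∞).toReal)⁻¹ ^ (i + 1)) hU hr ?_ hxB
    rw [pow_mul, ← mul_pow]
    apply one_le_pow₀
    have : (4 : ℝ≥0∞).toReal = 4 := by simp
    rw [this, ← div_eq_mul_inv, le_div_iff₀ (by norm_num)]
    linarith
  have hk : ∀ k : ℕ, ν (Hl μ 𝔅 ((4 : ℝ≥0∞)⁻¹ ^ (i + 1)) E) ≤ Q * (ν E + (k : ℝ≥0∞)⁻¹) := by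
    intro k
    obtain ⟨U, hEU, hU, hle⟩ := E.exists_isOpen_le_add ν (ε := (k : ℝ≥0∞)⁻¹)
      (ENNReal.inv_ne_zero.2 (ENNReal.natCast_ne_top k))
    refine (hopen U hU hEU).trans ?_
    gcongr
  have hlim : Tendsto (fun k : ℕ => Q * (ν E + (k : ℝ≥0∞)⁻¹)) atTop (𝓝 (Q * (ν E + 0))) :=
    ENNReal.Tendsto.const_mul (tendsto_const_nhds.add ENNReal.tendsto_inv_nat_nhds_zero)
      (Or.inr (ENNReal.pow_ne_top ENNReal.ofReal_ne_top))
  rw [add_zero] at hlim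
  exact ge_of_tendsto' hlim hk

lemma two_zpow_lt {a b : ℤ} (h : (2 : ℝ≥0∞) ^ a < 2 ^ b) : a < b := by
  by_contra hc
  push Not at hc
  exact absurd h (not_lt.2 (ENNReal.zpow_le_of_le (by norm_num) hc))

/-- Dyadic level set. -/
def lev (f : Eu n → ℝ) (l : ℤ) : Set (Eu n) :=
  {x | (2 : ℝ≥0∞) ^ l < ENNReal.ofReal |f x| ∧ ENNReal.ofReal |f x| ≤ (2 : ℝ≥0∞) ^ (l + 1)}

lemma lev_meas {f : Eu n → ℝ} (hf : Measurable f) (l : ℤ) : MeasurableSet (lev f l) := by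
  have hg : Measurable fun x => ENNReal.ofReal |f x| := by fun_prop
  exact (measurableSet_lt measurable_const hg).inter (measurableSet_le hg measurable_const)

lemma z2add (a b : ℤ) : (2 : ℝ≥0∞) ^ (a + b) = 2 ^ a * 2 ^ b :=
  ENNReal.zpow_add (by norm_num) (by norm_num) a b

lemma level_incl [IsLocallyFiniteMeasure μ] (hB : ∀ B ∈ 𝔅, IsConvexBasisSet B)
    {f : Eu n → ℝ} (hf : Measurable f) (j : ℤ) :
    {x | (2 : ℝ≥0∞) ^ (j + 1) < maxOp μ 𝔅 f x} ⊆
      ⋃ i : ℕ, Hl μ 𝔅 ((4 : ℝ≥0∞)⁻¹ ^ (i + 1)) (lev f (j + i)) := by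
  intro x hx
  by_contra hcon
  rw [mem_iUnion, not_exists] at hcon
  obtain ⟨B, h, hxB, hp, hlt⟩ := lt_maxOp_iff.1 hx
  have hBfin := fin_B (μ := μ) hB h
  have hle : ∀ i : ℕ, μ (lev f (j + i) ∩ B) ≤ (4 : ℝ≥0∞)⁻¹ ^ (i + 1) * μ B := by
    intro i
    by_contra hc
    push Not at hc
    exact hcon i ((mem_Hl hB (lev_meas hf _)).2 ⟨B, h, hxB, hp, hc⟩)
  have hpt : ∀ y, ENNReal.ofReal |f y| ≤ (2 : ℝ≥0∞) ^ j +
      ∑' i : ℕ, (lev f (j + i)).indicator (fun _ => (2 : ℝ≥0∞) ^ (j + i + 1)) y := by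
    intro y
    rcases le_or_gt (ENNReal.ofReal |f y|) ((2 : ℝ≥0∞) ^ j) with hy | hy
    · exact hy.trans le_self_add
    · obtain ⟨l, hl1, hl2⟩ := ENNReal.exists_mem_Ioc_zpow (x := ENNReal.ofReal |f y|) (y := 2)
        (pos_of_gt hy).ne' ENNReal.ofReal_ne_top (by norm_num) (by norm_num)
      have hjl : j < l + 1 := two_zpow_lt (hy.trans_le hl2)
      have hi : j + ((l - j).toNat : ℤ) = l := by omega
      refine le_trans ?_ le_add_self
      refine le_trans ?_ (ENNReal.le_tsum (l - j).toNat)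
      rw [hi, indicator_of_mem (show y ∈ lev f l from ⟨hl1, hl2⟩)]
      exact hl2
  have hint : ∫⁻ y in B, ENNReal.ofReal |f y| ∂μ ≤ (2 : ℝ≥0∞) ^ (j + 1) * μ B := by
    calc ∫⁻ y in B, ENNReal.ofReal |f y| ∂μ
        ≤ ∫⁻ y in B, ((2 : ℝ≥0∞) ^ j +
          ∑' i : ℕ, (lev f (j + i)).indicator (fun _ => (2 : ℝ≥0∞) ^ (j + i + 1)) y) ∂μ :=
          lintegral_mono hpt
      _ = (2 : ℝ≥0∞) ^ j * μ B +
          ∑' i : ℕ, (2 : ℝ≥0∞) ^ (j + i + 1) * μ (lev f (j + i) ∩ B) := by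
          rw [lintegral_add_left measurable_const, lintegral_const, Measure.restrict_apply_univ,
            lintegral_tsum]
          · congr 1
            refine tsum_congr fun i => ?_
            rw [lintegral_indicator_const (lev_meas hf _), Measure.restrict_apply (lev_meas hf _)]
          · intro i
            exact (measurable_const.indicator (lev_meas hf _)).aemeasurable
      _ ≤ (2 : ℝ≥0∞) ^ j * μ B +
          ∑' i : ℕ, (2 : ℝ≥0∞) ^ j * μ B * (2 : ℝ≥0∞)⁻¹ ^ (i + 1) := by
          refine add_le_add le_rfl (ENNReal.tsum_le_tsum fun i => ?_)
          calc (2 : ℝ≥0∞) ^ (j + i + 1) * μ (lev f (j + i) ∩ B)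
              ≤ (2 : ℝ≥0∞) ^ (j + i + 1) * ((4 : ℝ≥0∞)⁻¹ ^ (i + 1) * μ B) := by
                gcongr; exact hle i
            _ = _ := by
              have e1 : (2 : ℝ≥0∞) ^ (j + i + 1) = 2 ^ j * 2 ^ (i + 1) := by
                rw [add_assoc, z2add]; congr 1; norm_cast
              have e2 : (2 : ℝ≥0∞) * 4⁻¹ = 2⁻¹ := by
                have : (4 : ℝ≥0∞) = 2 * 2 := by norm_num
                rw [this, ENNReal.mul_inv (by simp) (by simp), ← mul_assoc,
                  ENNReal.mul_inv_cancel (by simp) (by simp), one_mul]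
              rw [e1, ← e2, mul_pow]; ring
      _ = (2 : ℝ≥0∞) ^ (j + 1) * μ B := by
          rw [ENNReal.tsum_mul_left, ENNReal.tsum_geometric_add_one, ENNReal.one_sub_inv_two,
            inv_inv, ENNReal.inv_mul_cancel (by simp) (by simp), z2add, zpow_one]
          ring
  have : (∫⁻ y in B, ENNReal.ofReal |f y| ∂μ) / μ B ≤ (2 : ℝ≥0∞) ^ (j + 1) :=
    ENNReal.div_le_of_le_mul hint
  exact absurd hlt (not_lt.2 this)

lemma strong [IsLocallyFiniteMeasure μ] (hB : ∀ B ∈ 𝔅, IsConvexBasisSet B)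
    {A D : ℝ≥0∞} (hA : A ≠ ⊤)
    (hw : ∀ E : Set (Eu n), MeasurableSet E → ∀ i : ℕ,
      ν (Hl μ 𝔅 ((4 : ℝ≥0∞)⁻¹ ^ (i + 1)) E) ≤ A * D ^ i * ν E) {p : ℝ} (hp : 0 < p)
    (hD : D < 2 ^ p) : BoundedOnLp μ ν 𝔅 p := by
  set Z : ℝ≥0∞ := 2 ^ p with hZ
  have hZ0 : Z ≠ 0 := by rw [hZ]; simp [hp.not_gt, hp.le]
  have hZt : Z ≠ ⊤ := ENNReal.rpow_ne_top_of_nonneg hp.le (by simp)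
  set C : ℝ≥0∞ := A * (4 : ℝ≥0∞) ^ p * ∑' i : ℕ, (D * Z⁻¹) ^ i with hC
  refine ⟨C, ?_, ?_⟩
  · refine ENNReal.mul_ne_top (ENNReal.mul_ne_top hA
      (ENNReal.rpow_ne_top_of_nonneg hp.le (by simp))) ?_
    rw [ENNReal.tsum_geometric]
    apply ENNReal.inv_ne_top.2
    rw [Ne, tsub_eq_zero_iff_le, not_le, ← div_eq_mul_inv]
    exact (ENNReal.div_lt_iff (Or.inl hZ0) (Or.inl hZt)).2 (by rwa [one_mul])
  intro f hf
  have hpt : ∀ x, maxOp μ 𝔅 f x ^ p ≤ ∑' j : ℤ,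
      {x | (2 : ℝ≥0∞) ^ (j + 1) < maxOp μ 𝔅 f x}.indicator
        (fun _ => ((2 : ℝ≥0∞) ^ (j + 2)) ^ p) x := by
    intro x
    by_cases h0 : maxOp μ 𝔅 f x = 0
    · rw [h0, ENNReal.zero_rpow_of_pos hp]; exact zero_le
    by_cases ht : maxOp μ 𝔅 f x = ⊤
    · set S := ∑' j : ℤ, {x | (2 : ℝ≥0∞) ^ (j + 1) < maxOp μ 𝔅 f x}.indicator
        (fun _ => ((2 : ℝ≥0∞) ^ (j + 2)) ^ p) x with hS
      have hN : ∀ N : ℕ, ((N : ℝ≥0∞)) ^ p ≤ S := by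
        intro N
        refine le_trans ?_ (ENNReal.le_tsum (N : ℤ))
        rw [indicator_of_mem]
        · gcongr
          have : (2 : ℝ≥0∞) ^ ((N : ℤ) + 2) = ((2 ^ (N + 2) : ℕ) : ℝ≥0∞) := by
            push_cast; norm_cast
          rw [this]
          exact_mod_cast (Nat.lt_two_pow_self (n := N)).le.trans
            (Nat.pow_le_pow_right (by norm_num) (by omega))
        · change (2 : ℝ≥0∞) ^ ((N : ℤ) + 1) < maxOp μ 𝔅 f x
          rw [ht]
          exact (ENNReal.zpow_lt_top (by norm_num) (by norm_num) _)
      have hSt : S = ⊤ := by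
        by_contra hne
        have h1 : S ^ p⁻¹ ≠ ⊤ := ENNReal.rpow_ne_top_of_nonneg (by positivity) hne
        obtain ⟨N, hN'⟩ := ENNReal.exists_nat_gt h1
        have := (ENNReal.le_rpow_inv_iff hp).2 (hN N)
        exact absurd hN' (not_lt.2 this)
      rw [hSt]; exact le_top
    · obtain ⟨l, hl1, hl2⟩ := ENNReal.exists_mem_Ioc_zpow (y := 2) h0 ht (by norm_num) (by norm_num)
      refine le_trans ?_ (ENNReal.le_tsum (l - 1))
      rw [indicator_of_mem]
      · have : l - 1 + 2 = l + 1 := by ring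
        rw [this]
        gcongr
      · change (2 : ℝ≥0∞) ^ (l - 1 + 1) < maxOp μ 𝔅 f x
        rwa [sub_add_cancel]
  have hlow : ∑' l : ℤ, ((2 : ℝ≥0∞) ^ l) ^ p * ν (lev f l) ≤
      ∫⁻ x, ENNReal.ofReal |f x| ^ p ∂ν := by
    calc ∑' l : ℤ, ((2 : ℝ≥0∞) ^ l) ^ p * ν (lev f l)
        = ∫⁻ x, ∑' l : ℤ, (lev f l).indicator (fun _ => ((2 : ℝ≥0∞) ^ l) ^ p) x ∂ν := by
          rw [lintegral_tsum]
          · refine tsum_congr fun l => ?_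
            rw [lintegral_indicator_const (lev_meas hf _)]
          · intro l
            exact (measurable_const.indicator (lev_meas hf _)).aemeasurable
      _ ≤ _ := by
          refine lintegral_mono fun x => ?_
          by_cases hx : ∃ l, x ∈ lev f l
          · obtain ⟨l, hl⟩ := hx
            have hun : ∀ l', l' ≠ l → (lev f l').indicator (fun _ => ((2 : ℝ≥0∞) ^ l') ^ p) x = 0 := by
              intro l' hne
              apply indicator_of_notMem
              intro hl'
              apply hne
              have h1 := two_zpow_lt (hl.1.trans_le hl'.2)
              have h2 := two_zpow_lt (hl'.1.trans_le hl.2)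
              omega
            simp only []
            rw [tsum_eq_single l hun, indicator_of_mem hl]
            exact ENNReal.rpow_le_rpow hl.1.le hp.le
          · push Not at hx
            simp [hx]
  have hkey : ∀ (j : ℤ) (i : ℕ), ((2 : ℝ≥0∞) ^ (j + 2)) ^ p * (A * D ^ i * ν (lev f (j + i))) =
      A * (4 : ℝ≥0∞) ^ p * (D * Z⁻¹) ^ i * (((2 : ℝ≥0∞) ^ (j + i)) ^ p * ν (lev f (j + i))) := by
    intro j i
    have e1 : ((2 : ℝ≥0∞) ^ (j + 2)) ^ p = ((2 : ℝ≥0∞) ^ j) ^ p * 4 ^ p := by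
      rw [z2add, ENNReal.mul_rpow_of_nonneg _ _ hp.le]
      congr 2; norm_num [zpow_ofNat]
    have e2 : ((2 : ℝ≥0∞) ^ (j + i)) ^ p = ((2 : ℝ≥0∞) ^ j) ^ p * Z ^ i := by
      rw [z2add, ENNReal.mul_rpow_of_nonneg _ _ hp.le, zpow_natCast, hZ, ← ENNReal.rpow_natCast,
        ← ENNReal.rpow_natCast, ← ENNReal.rpow_mul, ← ENNReal.rpow_mul, mul_comm p]
    have e3 : (D * Z⁻¹) ^ i * Z ^ i = D ^ i := by
      rw [← mul_pow, mul_assoc, ENNReal.inv_mul_cancel hZ0 hZt, mul_one]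
    rw [e1, e2, ← e3]; ring
  calc ∫⁻ x, maxOp μ 𝔅 f x ^ p ∂ν
      ≤ ∫⁻ x, ∑' j : ℤ, {x | (2 : ℝ≥0∞) ^ (j + 1) < maxOp μ 𝔅 f x}.indicator
        (fun _ => ((2 : ℝ≥0∞) ^ (j + 2)) ^ p) x ∂ν := lintegral_mono hpt
    _ = ∑' j : ℤ, ((2 : ℝ≥0∞) ^ (j + 2)) ^ p *
          ν {x | (2 : ℝ≥0∞) ^ (j + 1) < maxOp μ 𝔅 f x} := by
        rw [lintegral_tsum]
        · refine tsum_congr fun l => ?_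
          rw [lintegral_indicator_const (isOpen_lt_maxOp hB f _).measurableSet]
        · intro l
          exact (measurable_const.indicator (isOpen_lt_maxOp hB f _).measurableSet).aemeasurable
    _ ≤ ∑' j : ℤ, ∑' i : ℕ, ((2 : ℝ≥0∞) ^ (j + 2)) ^ p * (A * D ^ i * ν (lev f (j + i))) := by
        refine ENNReal.tsum_le_tsum fun j => ?_
        rw [ENNReal.tsum_mul_left]
        gcongr
        refine (measure_mono (level_incl hB hf j)).trans ((measure_iUnion_le _).trans ?_)
        exact ENNReal.tsum_le_tsum fun i => hw _ (lev_meas hf _) i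
    _ = ∑' i : ℕ, ∑' j : ℤ, A * (4 : ℝ≥0∞) ^ p * (D * Z⁻¹) ^ i *
          (((2 : ℝ≥0∞) ^ (j + i)) ^ p * ν (lev f (j + i))) := by
        rw [ENNReal.tsum_comm]
        exact tsum_congr fun i => tsum_congr fun j => hkey j i
    _ = ∑' i : ℕ, A * (4 : ℝ≥0∞) ^ p * (D * Z⁻¹) ^ i *
          ∑' l : ℤ, ((2 : ℝ≥0∞) ^ l) ^ p * ν (lev f l) := by
        refine tsum_congr fun i => ?_
        rw [ENNReal.tsum_mul_left]
        congr 1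
        exact (Equiv.addRight (i : ℤ)).tsum_eq (fun l : ℤ => ((2 : ℝ≥0∞) ^ l) ^ p * ν (lev f l))
    _ = C * ∑' l : ℤ, ((2 : ℝ≥0∞) ^ l) ^ p * ν (lev f l) := by
        rw [ENNReal.tsum_mul_right, ENNReal.tsum_mul_left]
    _ ≤ _ := by gcongr

end Meas

/-- For a homothecy invariant basis `𝔅` of nonempty bounded open convex
sets and locally finite Borel measures `μ, ν` with `μ` nonzero and doubling w.r.t. `𝔅`:
the Tauberian condition at some fixed level `γ ∈ (0,1)` for `M_{𝔅,μ}` w.r.t. `ν` holds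
iff there is `p₀ > 1` such that `M_{𝔅,μ}` is bounded on `L^p(ν)` for all `p > p₀`. -/
theorem statement1 (n : ℕ) (𝔅 : Set (Set (EuclideanSpace ℝ (Fin n))))
    (hB : ∀ B ∈ 𝔅, IsConvexBasisSet B) (hhom : HomothecyInvariant 𝔅)
    (μ ν : Measure (EuclideanSpace ℝ (Fin n)))
    (hlocμ : IsLocallyFiniteMeasure μ) (hlocν : IsLocallyFiniteMeasure ν)
    (hμ : μ ≠ 0) (hdbl : ∃ Δ : ℝ, 1 < Δ ∧ DoublingWrt μ 𝔅 Δ) :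
    (∃ γ ∈ Set.Ioo (0 : ℝ) 1, ∃ c : ℝ, 0 < c ∧ TauberianCond μ ν 𝔅 γ c)
    ↔ (∃ p₀ : ℝ, 1 < p₀ ∧ ∀ p : ℝ, p₀ < p → BoundedOnLp μ ν 𝔅 p) := by
  haveI := hlocμ
  haveI := hlocν
  obtain ⟨Δ, hΔ, hd⟩ := hdbl
  constructor
  · rintro ⟨γ, hγ, c, hc, hT⟩
    obtain ⟨A, D, hA, hD, hw⟩ := weak hB hhom hΔ hd hμ hγ hT
    obtain ⟨N, hN⟩ := ENNReal.exists_nat_gt hD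
    refine ⟨(N : ℝ) + 2, by linarith [(Nat.cast_nonneg N : (0 : ℝ) ≤ N)], fun p hp => ?_⟩
    have hN0 : (0 : ℝ) ≤ N := Nat.cast_nonneg N
    refine strong hB hA hw (by linarith) (hN.trans_le ?_)
    calc (N : ℝ≥0∞) ≤ ((2 ^ N : ℕ) : ℝ≥0∞) := by exact_mod_cast (Nat.lt_two_pow_self (n := N)).le
      _ = (2 : ℝ≥0∞) ^ (N : ℝ) := by rw [ENNReal.rpow_natCast]; push_cast; rfl
      _ ≤ 2 ^ p := ENNReal.rpow_le_rpow_of_exponent_le (by norm_num) (by linarith)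
  · rintro ⟨p₀, hp₀, hb⟩
    obtain ⟨C, hC, hb⟩ := hb (p₀ + 1) (by linarith)
    set p := p₀ + 1 with hp
    have hp0 : 0 < p := by linarith
    refine ⟨1 / 2, ⟨by norm_num, by norm_num⟩, (2 ^ p * C).toReal + 1, by positivity, ?_⟩
    intro E hE
    have hft : (2 : ℝ≥0∞) ^ p * C ≠ ⊤ :=
      ENNReal.mul_ne_top (ENNReal.rpow_ne_top_of_nonneg hp0.le (by simp)) hC
    have hhalf : ENNReal.ofReal (1 / 2) = 2⁻¹ := by
      rw [one_div, ENNReal.ofReal_inv_of_pos (by norm_num)]; simp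
    have h1 := hb (E.indicator 1) (measurable_one.indicator hE)
    have h2 : ∫⁻ x, ENNReal.ofReal |E.indicator (1 : Eu n → ℝ) x| ^ p ∂ν = ν E := by
      rw [← lintegral_indicator_one hE]
      congr 1
      ext y
      by_cases hy : y ∈ E <;> simp [hy, hp0]
    rw [h2] at h1
    set H := {x | ENNReal.ofReal (1 / 2) < maxOp μ 𝔅 (E.indicator 1) x} with hH
    have hHm : MeasurableSet H := (isOpen_lt_maxOp hB _ _).measurableSet
    have h3 : ((2 : ℝ≥0∞)⁻¹) ^ p * ν H ≤ ∫⁻ x, maxOp μ 𝔅 (E.indicator 1) x ^ p ∂ν := by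
      rw [← lintegral_indicator_const hHm]
      refine lintegral_mono fun x => ?_
      by_cases hx : x ∈ H
      · simp only []
        rw [indicator_of_mem hx]
        have hx' : ENNReal.ofReal (1 / 2) < maxOp μ 𝔅 (E.indicator 1) x := hx
        rw [hhalf] at hx'
        exact ENNReal.rpow_le_rpow hx'.le hp0.le
      · simp only []
        rw [indicator_of_notMem hx]; exact zero_le
    calc ν H = 2 ^ p * (((2 : ℝ≥0∞)⁻¹) ^ p * ν H) := by
          rw [← mul_assoc, ← ENNReal.mul_rpow_of_nonneg _ _ hp0.le,
            ENNReal.mul_inv_cancel (by simp) (by simp), ENNReal.one_rpow, one_mul]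
      _ ≤ 2 ^ p * (C * ν E) := mul_le_mul' le_rfl (h3.trans h1)
      _ = ENNReal.ofReal (2 ^ p * C).toReal * ν E := by
          rw [ENNReal.ofReal_toReal hft, mul_assoc]
      _ ≤ _ := by gcongr; linarith
end
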